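/- arXiv:math/0505186 — 4 statements merged into one kernel-verified Lean document; each statement's English description precedes it below -/
import Mathlib

section
/- Let n = 2m+1 and let X ⊂ P^n be a hypersurface of degree d ≥ 3 over a field. Then there are only finitely many m-planes contained in the smooth locus X_sm of X. In particular, a smooth hypersurface of degree d ≥ 3 in P^{2m+1} contains at most finitely many m-planes, i.e. its Fano variety F_m(X) is finite. -/
namespace S9

/-- `a` is a non-zero-divisor modulo `J`. -/
def NZ {R : Type*} [CommRing R] (J : Ideal R) (a : R) : Prop := ∀ z, z * a ∈ J → z ∈ J

/-- `l` is a (weakly) regular sequence modulo `J`. -/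
def Reg {R : Type*} [CommRing R] : Ideal R → List R → Prop
  | _, [] => True
  | J, a :: l => NZ J a ∧ Reg (J ⊔ Ideal.span {a}) l

/-- The ideal `J + (l)`. -/
def Ext {R : Type*} [CommRing R] : Ideal R → List R → Ideal R
  | J, [] => J
  | J, a :: l => Ext (J ⊔ Ideal.span {a}) l

section
variable {R : Type*} [CommRing R]

lemma Ext_eq (J : Ideal R) (l : List R) : Ext J l = J ⊔ Ideal.span {x | x ∈ l} := by
  induction l generalizing J with
  | nil => simp [Ext]
  | cons a l ih =>
    rw [Ext, ih, sup_assoc, ← Ideal.span_union]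
    congr 2
    ext x; simp

lemma Ext_append (J : Ideal R) (l : List R) (h : R) :
    Ext J (l ++ [h]) = Ext J l ⊔ Ideal.span {h} := by
  induction l generalizing J with
  | nil => simp [Ext]
  | cons a l ih => simp [Ext, ih]

lemma Ext_swap (J : Ideal R) (l : List R) (h : R) :
    Ext (J ⊔ Ideal.span {h}) l = Ext J l ⊔ Ideal.span {h} := by
  rw [Ext_eq, Ext_eq, sup_right_comm]

lemma Reg_append (J : Ideal R) (l : List R) (h : R) :
    Reg J (l ++ [h]) ↔ Reg J l ∧ NZ (Ext J l) h := by
  induction l generalizing J with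
  | nil => simp [Reg, Ext]
  | cons a l ih => simp [Reg, Ext, ih, and_assoc]

lemma NZ_of_pow {J : Ideal R} {a h : R} (ha : NZ J a)
    (H : a ∈ (J ⊔ Ideal.span {h}).radical) : NZ J h := by
  intro z hz
  obtain ⟨k, hk⟩ := H
  have key : ∀ k z, z * a ^ k ∈ J → z ∈ J := by
    intro k
    induction k with
    | zero => simp
    | succ k ih =>
      intro z hz
      exact ih z (ha _ (by rwa [mul_assoc, ← pow_succ]))
  apply key k
  obtain ⟨j, hj, w, hw, e⟩ := Submodule.mem_sup.mp hk
  obtain ⟨c, rfl⟩ := Ideal.mem_span_singleton'.mp hw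
  rw [← e]
  have : z * (j + c * h) = z * j + c * (z * h) := by ring
  rw [this]
  exact J.add_mem (J.mul_mem_left _ hj) (J.mul_mem_left _ hz)

lemma NZ_swap [IsNoetherianRing R] [IsLocalRing R] {J : Ideal R} {a b : R}
    (hm : a ∈ IsLocalRing.maximalIdeal R)
    (ha : NZ J a) (hb : NZ (J ⊔ Ideal.span {a}) b) :
    NZ J b ∧ NZ (J ⊔ Ideal.span {b}) a := by
  constructor
  · let N : Ideal R := 
      { carrier := {z | z * b ∈ J}
        zero_mem' := by simp
        add_mem' := by
          intro x y hx hy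
          simp only [Set.mem_ofPred_eq] at *
          rw [add_mul]; exact J.add_mem hx hy
        smul_mem' := by
          intro c x hx
          simp only [Set.mem_ofPred_eq, smul_eq_mul] at *
          rw [mul_assoc]; exact J.mul_mem_left _ hx }
    have hN : ∀ z, z ∈ N ↔ z * b ∈ J := fun z => Iff.rfl
    have : N ≤ J := by
      apply Submodule.le_of_le_smul_of_le_jacobson_bot (I := IsLocalRing.maximalIdeal R)
        (IsNoetherian.noetherian N)
      · exact IsLocalRing.maximalIdeal_le_jacobson _
      · intro z hz
        rw [hN] at hz
        have h1 := hb z (Ideal.mem_sup_left hz)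
        obtain ⟨j, hj, w, hw, e⟩ := Submodule.mem_sup.mp h1
        obtain ⟨c, rfl⟩ := Ideal.mem_span_singleton'.mp hw
        rw [← e]
        refine Submodule.add_mem_sup hj ?_
        rw [mul_comm]
        refine Submodule.smul_mem_smul hm ?_
        rw [hN]
        apply ha
        have : c * b * a = z * b - j * b := by rw [← e]; ring
        rw [this]
        exact J.sub_mem hz (J.mul_mem_right _ hj)
    exact fun z hz => this hz
  · intro z hz
    obtain ⟨j, hj, w, hw, e⟩ := Submodule.mem_sup.mp hz
    obtain ⟨c, rfl⟩ := Ideal.mem_span_singleton'.mp hw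
    have h1 : c ∈ J ⊔ Ideal.span {a} := by
      apply hb
      have : c * b = -j + z * a := by rw [← e]; ring
      rw [this]
      exact Submodule.add_mem_sup (J.neg_mem hj) (Ideal.mem_span_singleton'.mpr ⟨z, rfl⟩)
    obtain ⟨j', hj', w', hw', e'⟩ := Submodule.mem_sup.mp h1
    obtain ⟨v, rfl⟩ := Ideal.mem_span_singleton'.mp hw'
    have h2 : z - v * b ∈ J := by
      apply ha
      have : (z - v * b) * a = j + j' * b := by
        have : (z - v * b) * a = z * a - v * a * b := by ring
        rw [this, ← e, ← e']; ring
      rw [this]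
      exact J.add_mem hj (J.mul_mem_right _ hj')
    have : z = (z - v * b) + v * b := by ring
    rw [this]
    exact Submodule.add_mem_sup h2 (Ideal.mem_span_singleton'.mpr ⟨v, rfl⟩)

lemma Reg_rotate [IsNoetherianRing R] [IsLocalRing R] (J : Ideal R) (l : List R) (h : R)
    (hh : h ∈ IsLocalRing.maximalIdeal R)
    (hl : ∀ x ∈ l, x ∈ IsLocalRing.maximalIdeal R) :
    Reg J (l ++ [h]) ↔ Reg J (h :: l) := by
  induction l generalizing J with
  | nil => simp
  | cons a l ih =>
    have ih := fun J => ih J (fun x hx => hl x (by simp [hx]))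
    have ha := hl a (by simp)
    simp only [List.cons_append, Reg, ih]
    rw [sup_right_comm, ← and_assoc, ← and_assoc]
    refine and_congr_left fun _ => ⟨fun H => NZ_swap ha H.1 H.2, fun H => NZ_swap hh H.1 H.2⟩

lemma avoid [IsNoetherianRing R] [IsLocalRing R] (I : Ideal R) (b h : R)
    (hb : IsLocalRing.maximalIdeal R ≤ (I ⊔ Ideal.span {b}).radical)
    (hbm : I ⊔ Ideal.span {b} ≤ IsLocalRing.maximalIdeal R)
    (hav : ∀ p ∈ I.minimalPrimes, p ≠ IsLocalRing.maximalIdeal R → h ∉ p) :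
    IsLocalRing.maximalIdeal R ≤ (I ⊔ Ideal.span {h}).radical := by
  rw [Ideal.radical_eq_sInf]
  refine le_sInf ?_
  rintro q ⟨hq, hqp⟩
  have hIq : I ≤ q := le_sup_left.trans hq
  have hhq : h ∈ q := hq (Ideal.mem_sup_right (Ideal.mem_span_singleton_self h))
  obtain ⟨p, hp, hpq⟩ := Ideal.exists_minimalPrimes_le hIq
  by_contra hcon
  have hqm : q < IsLocalRing.maximalIdeal R :=
    lt_of_le_of_ne (IsLocalRing.le_maximalIdeal hqp.ne_top) (fun e => hcon e.ge)
  have hpm : p ≠ IsLocalRing.maximalIdeal R := fun e => hcon (e ▸ hpq)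
  have key := Ideal.mem_minimalPrimes_span_of_mem_minimalPrimes_span_insert hqm b (I : Set R)
    (by
      have : Ideal.span (insert b (I : Set R)) = I ⊔ Ideal.span {b} := by
        rw [Ideal.span_insert, Ideal.span_eq, sup_comm]
      rw [this]
      refine ⟨⟨inferInstance, hbm⟩, ?_⟩
      rintro r ⟨hr, hbr⟩ -
      exact hb.trans (hr.radical_le_iff.mpr hbr))
    (I : Set R) hIq
    (fun x hx => Ideal.le_radical (Ideal.subset_span (Set.mem_insert_of_mem _ hx)))
  rw [Ideal.span_eq] at key
  have : q ≤ p := key.2 hp.1 hpq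
  exact hav p hp hpm (this hhq)

lemma exists_avoid [IsNoetherianRing R] [IsLocalRing R] (I I' : Ideal R) :
    ∃ h ∈ IsLocalRing.maximalIdeal R,
      (∀ p ∈ I.minimalPrimes, p ≠ IsLocalRing.maximalIdeal R → h ∉ p) ∧
      (∀ p ∈ I'.minimalPrimes, p ≠ IsLocalRing.maximalIdeal R → h ∉ p) := by
  have f1 := Ideal.finite_minimalPrimes_of_isNoetherianRing R I
  have f2 := Ideal.finite_minimalPrimes_of_isNoetherianRing R I'
  set s := ((f1.union f2).subset (t := (I.minimalPrimes ∪ I'.minimalPrimes) \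
    {IsLocalRing.maximalIdeal R}) Set.sdiff_subset).toFinset with hs
  have hmem : ∀ p, p ∈ s ↔ (p ∈ I.minimalPrimes ∨ p ∈ I'.minimalPrimes) ∧
      p ≠ IsLocalRing.maximalIdeal R := by
    intro p; simp [hs]
  have hpr : ∀ p ∈ s, p.IsPrime := by
    intro p hp
    rcases ((hmem p).1 hp).1 with h | h
    · exact h.1.1
    · exact h.1.1
  have := (Ideal.subset_union_prime (s := s) (f := fun p => p) ⊥ ⊥
    (fun p hp _ _ => hpr p hp) (I := IsLocalRing.maximalIdeal R)).not.mpr (by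
      rintro ⟨p, hp, hle⟩
      exact ((hmem p).1 hp).2
        (le_antisymm (IsLocalRing.le_maximalIdeal (hpr p hp).ne_top) hle))
  rw [Set.not_subset] at this
  obtain ⟨h, hm, hh⟩ := this
  refine ⟨h, hm, fun p hp hne hhp => hh ?_, fun p hp hne hhp => hh ?_⟩
  · exact Set.mem_biUnion ((hmem p).2 ⟨Or.inl hp, hne⟩) hhp
  · exact Set.mem_biUnion ((hmem p).2 ⟨Or.inr hp, hne⟩) hhp

lemma Ext_le {J I : Ideal R} {l : List R} (hJ : J ≤ I) (hl : ∀ x ∈ l, x ∈ I) : Ext J l ≤ I := by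
  rw [Ext_eq]
  exact sup_le hJ (Ideal.span_le.mpr hl)

/-- Systems of parameters are regular sequences, once one of them is. -/
theorem sop_regular [IsNoetherianRing R] [IsLocalRing R] (n : ℕ) :
    ∀ (J : Ideal R) (a f : List R), a.length = n → f.length = n →
      J ≤ IsLocalRing.maximalIdeal R →
      (∀ x ∈ a, x ∈ IsLocalRing.maximalIdeal R) →
      (∀ x ∈ f, x ∈ IsLocalRing.maximalIdeal R) →
      IsLocalRing.maximalIdeal R ≤ (Ext J a).radical →
      IsLocalRing.maximalIdeal R ≤ (Ext J f).radical →
      Reg J a → Reg J f := by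
  induction n with
  | zero =>
    intro J a f _ hf _ _ _ _ _ _
    rw [List.length_eq_zero_iff] at hf
    subst hf
    trivial
  | succ n ih =>
    intro J a f hal hfl hJ ham hfm har hfr hreg
    obtain rfl | ⟨a, an, rfl⟩ := List.eq_nil_or_concat a
    · simp at hal
    obtain rfl | ⟨f, fn, rfl⟩ := List.eq_nil_or_concat f
    · simp at hfl
    simp only [List.concat_eq_append] at *
    rw [Ext_append] at har hfr
    rw [Reg_append] at hreg ⊢
    simp only [List.length_append, List.length_singleton, Nat.add_right_cancel_iff] at hal hfl
    simp only [List.mem_append, List.mem_singleton] at ham hfm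
    have ham' : ∀ x ∈ a, x ∈ IsLocalRing.maximalIdeal R := fun x hx => ham x (Or.inl hx)
    have hfm' : ∀ x ∈ f, x ∈ IsLocalRing.maximalIdeal R := fun x hx => hfm x (Or.inl hx)
    have hanm := ham an (Or.inr rfl)
    have hfnm := hfm fn (Or.inr rfl)
    obtain ⟨h, hm, h1, h2⟩ := exists_avoid (Ext J a) (Ext J f)
    have A := avoid _ _ h har (sup_le (Ext_le hJ ham')
      ((Ideal.span_singleton_le_iff_mem _).mpr hanm)) h1
    have B := avoid _ _ h hfr (sup_le (Ext_le hJ hfm')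
      ((Ideal.span_singleton_le_iff_mem _).mpr hfnm)) h2
    have hNa : NZ (Ext J a) h := NZ_of_pow hreg.2 (A hanm)
    have r1 := (Reg_rotate J a h hm ham').1 ((Reg_append _ _ _).2 ⟨hreg.1, hNa⟩)
    have r2 := ih (J ⊔ Ideal.span {h}) a f hal hfl
      (sup_le hJ ((Ideal.span_singleton_le_iff_mem _).mpr hm)) ham' hfm'
      (by rwa [Ext_swap]) (by rwa [Ext_swap]) r1.2
    have r3 : Reg J (h :: f) := ⟨r1.1, r2⟩
    rw [← Reg_rotate J f h hm hfm', Reg_append] at r3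
    exact ⟨r3.1, NZ_of_pow r3.2 (hfr hm)⟩

/-- Syzygies of a regular sequence with entries in an ideal `I` have entries in `I`;
so if the entries are small they vanish. -/
lemma syz {ι : Type*} {I : Ideal R} (f g : ι → R) (hf : ∀ i, f i ∈ I)
    (hg : ∀ i, g i ∈ I → g i = 0) (l : List ι) (hreg : Reg ⊥ (l.map f))
    (hsum : (l.map fun i => g i * f i).sum = 0) : ∀ i ∈ l, g i = 0 := by
  induction l using List.reverseRecOn with
  | nil => simp
  | append_singleton l j ih =>
    simp only [List.map_append, List.map_cons, List.map_nil, List.sum_append, List.sum_cons,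
      List.sum_nil, add_zero] at hreg hsum
    rw [Reg_append] at hreg
    have hmem : ∀ l : List ι, (l.map fun i => g i * f i).sum ∈ Ext ⊥ (l.map f) := by
      intro l
      rw [Ext_eq]
      apply Ideal.mem_sup_right
      apply list_sum_mem
      intro x hx
      obtain ⟨i, hi, rfl⟩ := List.mem_map.mp hx
      exact Ideal.mul_mem_left _ _ (Ideal.subset_span (List.mem_map.mpr ⟨i, hi, rfl⟩))
    have hj : g j = 0 := by
      apply hg
      refine (Ext_le (l := l.map f) (bot_le (a := I)) ?_) (hreg.2 (g j) ?_)
      · intro x hx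
        obtain ⟨i, hi, rfl⟩ := List.mem_map.mp hx
        exact hf i
      · rw [eq_neg_of_add_eq_zero_right hsum]
        exact neg_mem (hmem l)
    rw [hj, zero_mul, add_zero] at hsum
    intro i hi
    rcases List.mem_append.mp hi with h | h
    · exact ih hreg.1 hsum i h
    · rw [List.mem_singleton.mp h]; exact hj

end
end S9

namespace S9
open MvPolynomial

section
variable {K : Type*} [Field K] {ι : Type*}

lemma mem_vars_iff (p : MvPolynomial ι K) : p ∈ idealOfVars ι K ↔ constantCoeff p = 0 := by
  have := mem_pow_idealOfVars_iff' 1 p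
  rw [pow_one] at this
  rw [this]
  constructor
  · intro h
    exact h 0 (by simp)
  · intro h x hx
    have : x = 0 := by
      rw [Nat.lt_one_iff] at hx
      exact (Finsupp.degree_eq_zero_iff x).mp hx
    rw [this]; exact h

instance vars_prime : (idealOfVars ι K).IsPrime := by
  have : idealOfVars ι K = RingHom.ker (constantCoeff (R := K) (σ := ι)) := by
    ext p; rw [mem_vars_iff, RingHom.mem_ker]
  rw [this]; exact RingHom.ker_isPrime _

lemma hom_mem {p : MvPolynomial ι K} {e n : ℕ} (hp : p.IsHomogeneous e) (hn : n ≤ e) :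
    p ∈ idealOfVars ι K ^ n := by
  rw [mem_pow_idealOfVars_iff']
  intro x hx
  exact hp.coeff_eq_zero (by omega)

lemma lin_zero {u g : MvPolynomial ι K} (hg : g.IsHomogeneous 1) (hu : u ∉ idealOfVars ι K)
    (h : u * g ∈ idealOfVars ι K ^ 2) : g = 0 := by
  rw [mem_vars_iff] at hu
  have h1 : u - C (constantCoeff u) ∈ idealOfVars ι K := by
    rw [mem_vars_iff]; simp
  have h2 : (u - C (constantCoeff u)) * g ∈ idealOfVars ι K ^ 2 := by
    rw [pow_two]
    exact Ideal.mul_mem_mul h1 (by simpa using hom_mem hg le_rfl)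
  have h3 : C (constantCoeff u) * g ∈ idealOfVars ι K ^ 2 := by
    have := Ideal.sub_mem _ h h2
    rwa [← sub_mul, sub_sub_cancel] at this
  have h4 : g ∈ idealOfVars ι K ^ 2 := by
    have := Ideal.mul_mem_left _ (C (constantCoeff u)⁻¹) h3
    rwa [← mul_assoc, ← C_mul, inv_mul_cancel₀ hu, C_1, one_mul] at this
  rw [mem_pow_idealOfVars_iff'] at h4
  ext x
  rw [coeff_zero]
  by_cases hx : x.degree = 1
  · exact h4 x (by omega)
  · exact hg.coeff_eq_zero hx

lemma NZ_X (s : Set ι) (i : ι) (hi : i ∉ s) :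
    NZ (Ideal.span (X '' s : Set (MvPolynomial ι K))) (X i) := by
  intro z hz
  rw [mem_ideal_span_X_image] at hz ⊢
  intro μ hμ
  obtain ⟨j, hj, hj'⟩ := hz (μ + Finsupp.single i 1) (by
    rw [mem_support_iff] at hμ ⊢
    rwa [coeff_mul_X])
  refine ⟨j, hj, ?_⟩
  have : i ≠ j := fun e => hi (e ▸ hj)
  simpa [Finsupp.single_apply, this] using hj'

lemma NZ_loc {A : Type*} [CommRing A] (P : Ideal A) [P.IsPrime] (I : Ideal A) (a : A)
    (h : NZ I a) : NZ (I.map (algebraMap A (Localization.AtPrime P)))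
      (algebraMap A (Localization.AtPrime P) a) := by
  intro z hz
  obtain ⟨x, s, rfl⟩ := IsLocalization.exists_mk'_eq P.primeCompl z
  rw [IsLocalization.mk'_mem_map_algebraMap_iff]
  rw [mul_comm, IsLocalization.mul_mk'_eq_mk'_of_mul,
    IsLocalization.mk'_mem_map_algebraMap_iff] at hz
  obtain ⟨t, ht, htm⟩ := hz
  refine ⟨t, ht, h _ ?_⟩
  convert htm using 1
  ring

lemma Reg_X (s : Set ι) (l : List ι) (hl : l.Nodup) (hs : ∀ i ∈ l, i ∉ s) :
    Reg ((Ideal.span (X '' s : Set (MvPolynomial ι K))).map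
      (algebraMap _ (Localization.AtPrime (idealOfVars ι K))))
      (l.map fun i => algebraMap (MvPolynomial ι K) (Localization.AtPrime (idealOfVars ι K)) (X i)) := by
  induction l generalizing s with
  | nil => trivial
  | cons i l ih =>
    rw [List.nodup_cons] at hl
    refine ⟨NZ_loc _ _ _ (NZ_X s i (hs i (by simp))), ?_⟩
    have := ih (insert i s) hl.2 (by
      intro j hj hj'
      rcases hj' with rfl | hj'
      · exact hl.1 hj
      · exact hs j (by simp [hj]) hj')
    rw [Set.image_insert_eq, Ideal.span_insert, sup_comm, Ideal.map_sup, Ideal.map_span,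
      Ideal.map_span, Set.image_singleton] at this
    rw [Ideal.map_span]
    exact this

/-- A system of `n` forms of degree `≥ 2` in `n` variables without common zero has no
linear syzygies. -/
theorem no_lin_syz [IsAlgClosed K] [Fintype ι] (f g : ι → MvPolynomial ι K) (e : ℕ) (he : 2 ≤ e)
    (hf : ∀ i, (f i).IsHomogeneous e) (hg : ∀ i, (g i).IsHomogeneous 1)
    (hz : ∀ t : ι → K, (∀ i, eval t (f i) = 0) → t = 0)
    (hs : ∑ i, g i * f i = 0) : ∀ i, g i = 0 := by
  classical
  set M := idealOfVars ι K with hM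
  let R := Localization.AtPrime M
  let φ := algebraMap (MvPolynomial ι K) R
  have : IsNoetherianRing R := IsLocalization.isNoetherianRing M.primeCompl R inferInstance
  set l : List ι := Finset.univ.toList with hl
  have hmax : M.map φ = IsLocalRing.maximalIdeal R := Localization.AtPrime.map_eq_maximalIdeal
  have hMle : M ≤ (Ideal.span (Set.range f)).radical := by
    rw [← vanishingIdeal_zeroLocus_eq_radical (K := K), zeroLocus_span, hM, Ideal.span_le]
    rintro _ ⟨i, rfl⟩
    rw [SetLike.mem_coe, mem_vanishingIdeal_iff]
    intro x hx
    have : x = 0 := hz x fun j => by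
      have := hx (f j) ⟨j, rfl⟩
      rwa [← coe_aeval_eq_eval]
    simp [this]
  have hlr : ∀ q : ι → MvPolynomial ι K, Ext ⊥ (l.map fun i => φ (q i)) =
      (Ideal.span (Set.range q)).map φ := by
    intro q
    rw [Ext_eq, bot_sup_eq, Ideal.map_span]
    congr 1
    ext x
    simp [hl]
  have hfM : ∀ i, f i ∈ M := fun i => by
    simpa using hom_mem (n := 1) (hf i) (by omega)
  have hreg : Reg ⊥ (l.map fun i => φ (f i)) := by
    apply sop_regular l.length ⊥ (l.map fun i => φ (X i))
    · simp
    · simp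
    · exact bot_le
    · intro x hx
      obtain ⟨i, hi, rfl⟩ := List.mem_map.mp hx
      rw [← hmax]
      exact Ideal.mem_map_of_mem _ (Ideal.subset_span ⟨i, rfl⟩)
    · intro x hx
      obtain ⟨i, hi, rfl⟩ := List.mem_map.mp hx
      rw [← hmax]
      exact Ideal.mem_map_of_mem _ (hfM i)
    · rw [hlr, ← hmax]
      exact Ideal.le_radical
    · rw [hlr, ← hmax]
      exact (Ideal.map_mono hMle).trans (Ideal.map_radical_le _)
    · have := Reg_X (K := K) (∅ : Set ι) l (Finset.nodup_toList _) (by simp)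
      simpa using this
  have hinj : Function.Injective φ :=
    IsLocalization.injective R M.primeCompl_le_nonZeroDivisors
  have key := syz (I := (M ^ 2).map φ) (fun i => φ (f i)) (fun i => φ (g i))
    (fun i => Ideal.mem_map_of_mem _ (hom_mem (hf i) he))
    (by
      intro i hi
      rw [IsLocalization.algebraMap_mem_map_algebraMap_iff M.primeCompl] at hi
      obtain ⟨u, hu, hug⟩ := hi
      rw [lin_zero (hg i) hu hug, map_zero])
    l hreg (by
      have := congrArg φ hs
      rw [map_zero, map_sum] at this
      rw [← this, hl, Finset.sum_map_toList]
      simp)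
  intro i
  apply hinj
  rw [map_zero]
  exact key i (by simp [hl])

end
end S9

namespace S9
open MvPolynomial

section
variable {K : Type*} [Field K] {σ : Type*}

lemma taylor [Fintype σ] (b : σ → K) (P : MvPolynomial σ K) :
    P - C (eval b P) - ∑ c, C (eval b (pderiv c P)) * (X c - C (b c)) ∈
      (vanishingIdeal K {b}) ^ 2 := by
  classical
  have hX : ∀ c, (X c - C (b c) : MvPolynomial σ K) ∈ vanishingIdeal K {b} := by
    intro c; rw [mem_vanishingIdeal_singleton_iff]; simp
  have hP : ∀ P, (P - C (eval b P) : MvPolynomial σ K) ∈ vanishingIdeal K {b} := by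
    intro P; rw [mem_vanishingIdeal_singleton_iff]; simp
  induction P using MvPolynomial.induction_on with
  | C a => simp
  | add p q hp hq =>
    convert Ideal.add_mem _ hp hq using 1
    simp only [map_add, add_mul, Finset.sum_add_distrib]
    ring
  | mul_X p i hp =>
    have h1 := Ideal.mul_mem_right (C (b i)) _ hp
    have h2 : (p - C (eval b p)) * (X i - C (b i)) ∈ (vanishingIdeal K {b}) ^ 2 := by
      rw [pow_two]; exact Ideal.mul_mem_mul (hP p) (hX i)
    convert Ideal.add_mem _ h1 h2 using 1
    have : ∑ c, C (eval b (pderiv c (p * X i))) * (X c - C (b c)) =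
        (∑ c, C (eval b (pderiv c p)) * (X c - C (b c))) * C (b i)
          + C (eval b p) * (X i - C (b i)) := by
      rw [Finset.sum_mul]
      rw [← Finset.sum_erase_add _ _ (Finset.mem_univ i),
        ← Finset.sum_erase_add (a := i) Finset.univ
          (fun c => C (eval b (pderiv c p)) * (X c - C (b c)) * C (b i)) (Finset.mem_univ i)]
      rw [add_assoc]
      congr 1
      · apply Finset.sum_congr rfl
        intro c hc
        have hc : i ≠ c := fun e => by simp [e] at hc
        simp [pderiv_X_of_ne hc]
        ring
      · simp
        ring
    rw [this]
    simp only [map_mul, eval_X]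
    ring

lemma isolated [Fintype σ] (J : Ideal (MvPolynomial σ K)) (b : σ → K)
    (hJ : ∀ P ∈ J, eval b P = 0)
    (hT : ∀ δ : σ → K, (∀ P ∈ J, ∑ c, δ c * eval b (pderiv c P) = 0) → δ = 0) :
    vanishingIdeal K {b} ∈ J.minimalPrimes := by
  classical
  set M := vanishingIdeal K {b} with hM
  have hmem : ∀ P, P ∈ M ↔ eval b P = 0 := fun P => by
    rw [hM, mem_vanishingIdeal_singleton_iff, aeval_eq_eval]
  have hX : ∀ c, (X c - C (b c) : MvPolynomial σ K) ∈ J ⊔ M ^ 2 := by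
    intro c
    let Φ : (J.restrictScalars K) →ₗ[K] (σ → K) :=
      { toFun := fun P => fun c => eval b (pderiv c P.1)
        map_add' := by intro x y; ext c; simp
        map_smul' := by intro r x; ext c; simp [smul_eval] }
    have hΦ : LinearMap.range Φ = ⊤ := by
      by_contra hne
      obtain ⟨f, hf0, hf⟩ := Submodule.exists_le_ker_of_lt_top _ (lt_top_iff_ne_top.mpr hne)
      apply hf0
      have hv : ∀ v : σ → K, f v = ∑ c, f (Pi.single c 1) * v c := by
        intro v
        conv_lhs => rw [pi_eq_sum_univ' v]
        rw [map_sum]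
        apply Finset.sum_congr rfl
        intro c _
        rw [map_smul, smul_eq_mul, mul_comm]
      have := hT (fun c => f (Pi.single c 1)) (fun P hP => by
        have := hf ⟨⟨P, hP⟩, rfl⟩
        rw [LinearMap.mem_ker, hv] at this
        exact this)
      ext v
      simpa using congrFun this v
    obtain ⟨⟨P, hP⟩, hPc⟩ : Pi.single c 1 ∈ LinearMap.range Φ := hΦ ▸ Submodule.mem_top
    have ht := taylor b P
    have hP' : P ∈ J := hP
    have hPc' : ∀ k, eval b (pderiv k P) = (Pi.single c 1 : σ → K) k := fun k => congrFun hPc k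
    simp only [hPc', hJ P hP', C_0, sub_zero] at ht
    rw [Finset.sum_eq_single c (by intro k _ hk; simp [hk]) (by simp)] at ht
    simp only [Pi.single_eq_same, C_1, one_mul] at ht
    have : (X c - C (b c) : MvPolynomial σ K) = P + - (P - (X c - C (b c))) := by ring
    rw [this]
    exact Submodule.add_mem_sup hP' (neg_mem ht)
  have hle : M ≤ J ⊔ M ^ 2 := by
    intro P hP
    have ht := taylor b P
    rw [(hmem P).1 hP, C_0, sub_zero] at ht
    have := Ideal.add_mem (J ⊔ M ^ 2) (Ideal.mem_sup_right ht)
      (Ideal.sum_mem (J ⊔ M ^ 2) (t := Finset.univ)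
        (f := fun c => C (eval b (pderiv c P)) * (X c - C (b c)))
        (fun c _ => Ideal.mul_mem_left _ _ (hX c)))
    rwa [sub_add_cancel] at this
  refine ⟨⟨inferInstance, fun P hP => (hmem P).2 (hJ P hP)⟩, ?_⟩
  rintro p ⟨hp, hJp⟩ hpM
  obtain ⟨r, hr, hrM⟩ := Submodule.exists_sub_one_mem_and_smul_le_of_fg_of_le_sup
    (I := M) (N := p) (N' := M) (P := M) (IsNoetherian.noetherian M) le_rfl
    (hle.trans (sup_le_sup hJp (by rw [pow_two, smul_eq_mul])))
  have hrp : r ∉ p := by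
    intro h
    have h1 := Ideal.sub_mem _ (hpM h) hr
    rw [sub_sub_cancel, hmem] at h1
    simp at h1
  intro x hx
  have : r * x ∈ p := hrM (Submodule.smul_mem_pointwise_smul _ _ _ hx)
  exact (hp.mem_or_mem this).resolve_left hrp

lemma finite_isolated [Fintype σ] (J : Ideal (MvPolynomial σ K)) :
    {b : σ → K | (∀ P ∈ J, eval b P = 0) ∧
      ∀ δ : σ → K, (∀ P ∈ J, ∑ c, δ c * eval b (pderiv c P) = 0) → δ = 0}.Finite := by
  apply Set.Finite.of_finite_image (f := fun b => (vanishingIdeal K {b} : Ideal (MvPolynomial σ K)))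
  · refine (Ideal.finite_minimalPrimes_of_isNoetherianRing _ J).subset ?_
    rintro _ ⟨b, ⟨h1, h2⟩, rfl⟩
    exact isolated J b h1 h2
  · intro b _ b' _ h
    ext c
    have : (X c - C (b' c) : MvPolynomial σ K) ∈ vanishingIdeal K {b} := by
      simp only at h
      rw [h, mem_vanishingIdeal_singleton_iff]; simp
    rw [mem_vanishingIdeal_singleton_iff] at this
    simpa [sub_eq_zero] using this

lemma chain_rule {τ : Type*} [Fintype τ] (c : σ) (q : τ → MvPolynomial σ K)
    (F : MvPolynomial τ K) :
    pderiv c (aeval q F) = ∑ k, aeval q (pderiv k F) * pderiv c (q k) := by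
  classical
  induction F using MvPolynomial.induction_on with
  | C a => simp [algebraMap_eq]
  | add p r hp hr => simp only [map_add, hp, hr, add_mul, Finset.sum_add_distrib]
  | mul_X p i hp =>
    simp only [map_mul, aeval_X, pderiv_mul, hp, map_add, add_mul, Finset.sum_add_distrib,
      Finset.sum_mul]
    congr 1
    · exact Finset.sum_congr rfl fun k _ => by ring
    · rw [Finset.sum_eq_single i]
      · simp
      · intro k _ hk; simp [pderiv_X_of_ne hk.symm]
      · simp

end

section
variable {K : Type*} [Field K] [IsAlgClosed K] {ι : Type*} [Fintype ι]

/-- The point of the graph of `A` over `t`. -/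
def gpt (A : ι × ι → K) (t : ι → K) : ι ⊕ ι → K := Sum.elim t (fun i => ∑ j, t j * A (j, i))

theorem finite_graph (F : MvPolynomial (ι ⊕ ι) K) (d : ℕ) (hd : 3 ≤ d) (hF : F.IsHomogeneous d) :
    {A : ι × ι → K | ∀ t, eval (gpt A t) F = 0 ∧
      (t ≠ 0 → ∃ c, eval (gpt A t) (pderiv c F) ≠ 0)}.Finite := by
  classical
  have : Infinite K := IsAlgClosed.instInfinite
  let q : (ι → K) → ι ⊕ ι → MvPolynomial (ι × ι) K := fun t =>
    Sum.elim (fun j => C (t j)) (fun i => ∑ j, C (t j) * X (j, i))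
  have hq : ∀ A t (G : MvPolynomial (ι ⊕ ι) K), eval A (aeval (q t) G) = eval (gpt A t) G := by
    intro A t G
    rw [← coe_aeval_eq_eval, ← coe_aeval_eq_eval]
    change (aeval A).comp (aeval (q t)) G = aeval (gpt A t) G
    congr 1
    ext k
    rcases k with j | i <;> simp [q, gpt]
  let J : Ideal (MvPolynomial (ι × ι) K) := Ideal.span (Set.range fun t => aeval (q t) F)
  refine (finite_isolated J).subset ?_
  intro A hA
  refine ⟨?_, ?_⟩
  · intro P hP
    have : J ≤ RingHom.ker (eval A) := by
      rw [Ideal.span_le]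
      rintro _ ⟨t, rfl⟩
      rw [SetLike.mem_coe, RingHom.mem_ker, hq]
      exact (hA t).1
    exact this hP
  · intro δ hδ
    let L : ι ⊕ ι → MvPolynomial ι K :=
      Sum.elim (fun j => X j) (fun i => ∑ j, X j * C (A (j, i)))
    have hL : ∀ t (G : MvPolynomial (ι ⊕ ι) K), eval t (aeval L G) = eval (gpt A t) G := by
      intro t G
      rw [← coe_aeval_eq_eval, ← coe_aeval_eq_eval]
      change (aeval t).comp (aeval L) G = aeval (gpt A t) G
      congr 1
      ext k
      rcases k with j | i <;> simp [L, gpt]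
    let f : ι → MvPolynomial ι K := fun i => aeval L (pderiv (Sum.inr i) F)
    let g : ι → MvPolynomial ι K := fun i => ∑ j, X j * C (δ (j, i))
    have hXC : ∀ (B : ι × ι → K) i,
        (∑ j, X j * C (B (j, i)) : MvPolynomial ι K).IsHomogeneous 1 := by
      intro B i
      apply IsHomogeneous.sum
      intro j _
      simpa using (isHomogeneous_X K j).mul (isHomogeneous_C ι (B (j, i)))
    have hLh : ∀ k, (L k).IsHomogeneous 1 := by
      rintro (j | i)
      · exact isHomogeneous_X K j
      · exact hXC A i
    have hL0 : aeval L F = 0 := by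
      apply MvPolynomial.funext
      intro t
      rw [hL, map_zero]; exact (hA t).1
    have hg0 : ∀ i, g i = 0 := by
      apply no_lin_syz f g (d - 1) (by omega)
      · intro i
        have := (hF.pderiv (i := Sum.inr i)).aeval L hLh
        rwa [one_mul] at this
      · exact hXC δ
      · intro t ht
        by_contra hne
        obtain ⟨c, hc⟩ := (hA t).2 hne
        rcases c with j | i
        · apply hc
          have h1 := chain_rule j L F
          rw [hL0, map_zero, Fintype.sum_sum_type] at h1
          have h2 := congrArg (eval t) h1
          have h3 : ∀ i, eval t (aeval L (pderiv (Sum.inr i) F)) = 0 := ht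
          simp only [map_zero, map_add, map_sum, map_mul, h3, zero_mul, Finset.sum_const_zero,
            add_zero, hL] at h2
          rw [Finset.sum_eq_single j] at h2
          · simpa [L] using h2.symm
          · intro k _ hk
            simp [L, pderiv_X_of_ne hk]
          · simp
        · apply hc
          rw [← hL]; exact ht i
      · apply MvPolynomial.funext
        intro t
        have h1 := hδ (aeval (q t) F) (Ideal.subset_span ⟨t, rfl⟩)
        simp only [chain_rule, Fintype.sum_sum_type, map_add, map_sum, map_mul, hq] at h1
        have e1 : ∀ c j, pderiv c (q t (Sum.inl j)) = 0 := by intro c j; simp [q]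
        have e2 : ∀ c i, eval A (pderiv c (q t (Sum.inr i))) =
            if c.2 = i then t c.1 else 0 := by
          rintro ⟨j, i'⟩ i
          simp only [q, Sum.elim_inr, map_sum, pderiv_C_mul, eval_mul, eval_C]
          rw [Finset.sum_eq_single j]
          · by_cases h : i' = i
            · subst h; simp
            · have : (j, i) ≠ (j, i') := by simpa using fun e => h e.symm
              simp [pderiv_X_of_ne this, h]
          · intro k _ hk
            have : (k, i) ≠ (j, i') := by simp [hk]
            simp [pderiv_X_of_ne this]
          · simp
        simp only [e1, e2, map_zero, mul_zero, Finset.sum_const_zero, zero_add] at h1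
        simp only [mul_ite, mul_zero, Finset.sum_ite_eq, Finset.mem_univ, if_true] at h1
        rw [Fintype.sum_prod_type, Finset.sum_comm] at h1
        simp only [map_sum, map_mul, map_zero, g, f, hL, eval_X, eval_C]
        rw [← h1]
        apply Finset.sum_congr rfl
        intro i _
        rw [Finset.sum_mul]
        exact Finset.sum_congr rfl fun j _ => by ring
    ext ⟨j, i⟩
    have h1 := congrArg (eval (Pi.single j 1)) (hg0 i)
    simpa [g, Pi.single_apply] using h1

end

section
variable {K : Type*} [Field K]

lemma exists_chart {n N : ℕ} (hN : N = n + n) (W : Submodule K (Fin N → K))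
    (hW : Module.finrank K W = n) :
    ∃ (e : Fin n ⊕ Fin n ≃ Fin N) (A : Fin n × Fin n → K),
      ∀ v, v ∈ W ↔ ∃ t, v = gpt A t ∘ e.symm := by
  classical
  let u : Fin N → (Fin N → K) ⧸ W := fun c => W.mkQ (Pi.single c 1)
  obtain ⟨κ, a, ha, hsp, hli⟩ := exists_linearIndependent' K u
  have htop : Submodule.span K (Set.range u) = ⊤ := by
    have : Set.range u = W.mkQ '' (Set.range fun c => Pi.single c 1) := by
      rw [← Set.range_comp]; rfl
    rw [this, Submodule.span_image]
    have h2 : Submodule.span K (Set.range fun c : Fin N => (Pi.single c 1 : Fin N → K)) = ⊤ := by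
      convert (Pi.basisFun K (Fin N)).span_eq using 3
      ext c; simp
    rw [h2, Submodule.map_top, Submodule.range_mkQ]
  rw [htop] at hsp
  have : Finite κ := Finite.of_injective a ha
  have : Fintype κ := Fintype.ofFinite κ
  let B := Module.Basis.mk hli hsp.ge
  have hcard : Fintype.card κ = n := by
    rw [← Module.finrank_eq_card_basis B]
    have := W.finrank_quotient_add_finrank
    simp at this
    omega
  let eκ : Fin n ≃ κ := (Fintype.equivFinOfCardEq hcard).symm
  have hc2 : Fintype.card {c // c ∉ Set.range a} = n := by
    rw [Fintype.card_subtype_compl]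
    have : Fintype.card {c // c ∈ Set.range a} = n := by
      rw [← hcard]; exact Set.card_range_of_injective ha
    rw [this]; simp; omega
  let eκ' : Fin n ≃ {c // c ∉ Set.range a} := (Fintype.equivFinOfCardEq hc2).symm
  let e : Fin n ⊕ Fin n ≃ Fin N :=
    ((Equiv.sumComm _ _).trans
      (Equiv.sumCongr (eκ.trans (Equiv.ofInjective a ha)) eκ')).trans
      (Equiv.Set.sumCompl (Set.range a))
  have her : ∀ i, e (Sum.inr i) = a (eκ i) := by intro i; rfl
  let T : W →ₗ[K] (Fin n → K) :=
    { toFun := fun v j => v.1 (e (Sum.inl j))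
      map_add' := by intros; rfl
      map_smul' := by intros; rfl }
  have hT : Function.Injective T := by
    rw [← LinearMap.ker_eq_bot, LinearMap.ker_eq_bot']
    rintro ⟨v, hv⟩ hv0
    have h0 : ∀ j, v (e (Sum.inl j)) = 0 := fun j => congrFun hv0 j
    have h1 : v = ∑ i, v (e (Sum.inr i)) • (Pi.single (a (eκ i)) 1 : Fin N → K) := by
      have h2 : v = ∑ c, v c • (Pi.single c 1 : Fin N → K) := by
        ext k; simp [Finset.sum_apply, Pi.single_apply]
      conv_lhs => rw [h2]
      rw [← e.sum_comp, Fintype.sum_sum_type]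
      simp [h0, her]
    have h3 : ∑ i, v (e (Sum.inr i)) • u (a (eκ i)) = 0 := by
      have : W.mkQ v = 0 := by simpa using hv
      rw [h1, map_sum] at this
      simpa [u] using this
    have hli' : LinearIndependent K (fun i => u (a (eκ i))) := hli.comp eκ eκ.injective
    have h4 := Fintype.linearIndependent_iff.mp hli' _ h3
    ext c
    obtain ⟨k, rfl⟩ := e.surjective c
    rcases k with j | i
    · exact h0 j
    · exact h4 i
  let T' : W ≃ₗ[K] (Fin n → K) := LinearEquiv.ofInjectiveOfFinrankEq T hT (by simp [hW])
  have hT' : ∀ (w : W) j, T' w j = w.1 (e (Sum.inl j)) := fun w j => rfl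
  refine ⟨e, fun p => (T'.symm (Pi.single p.1 1)).1 (e (Sum.inr p.2)), ?_⟩
  have key : ∀ t, (T'.symm t).1 =
      gpt (fun p => (T'.symm (Pi.single p.1 1)).1 (e (Sum.inr p.2))) t ∘ e.symm := by
    intro t
    ext c
    obtain ⟨k, rfl⟩ := e.surjective c
    rcases k with j | i
    · rw [← hT']; simp [gpt]
    · have : t = ∑ j, t j • (Pi.single j 1 : Fin n → K) := by
        ext k; simp [Finset.sum_apply, Pi.single_apply]
      conv_lhs => rw [this]
      simp [gpt, map_sum, Finset.sum_apply]
  intro v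
  constructor
  · intro hv
    refine ⟨T' ⟨v, hv⟩, ?_⟩
    rw [← key]; simp
  · rintro ⟨t, rfl⟩
    rw [← key]
    exact (T'.symm t).2

end
end S9



/-- **Corollary (Debarre/Starr, appendix).** Let n = 2m+1 and let X ⊂ Pⁿ be a
hypersurface of degree d ≥ 3 over a field k, cut out by a nonzero form F of degree d.
Then only finitely many m-planes (over the algebraic closure, given as
(m+1)-dimensional linear subspaces of the geometric affine cone) are contained in
the smooth locus X_sm of X, i.e. consist entirely of points of X at which some
partial derivative of F is non-zero.  In particular a smooth hypersurface of degree
d ≥ 3 in P^{2m+1} contains at most finitely many m-planes: its Fano variety F_m(X)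
is finite. -/
theorem statement9 (k : Type) [Field k] (m d : ℕ) (hd : 3 ≤ d)
    (F : MvPolynomial (Fin (2 * m + 1 + 1)) k) (hF : F.IsHomogeneous d)
    (hF0 : F ≠ 0) :
    {W : Submodule (AlgebraicClosure k) (Fin (2 * m + 1 + 1) → AlgebraicClosure k) |
      Module.finrank (AlgebraicClosure k) W = m + 1 ∧
      ∀ v ∈ W, v ≠ 0 → MvPolynomial.aeval v F = 0 ∧
        ∃ i, MvPolynomial.aeval v (MvPolynomial.pderiv i F) ≠ 0}.Finite := by
  classical
  let K := AlgebraicClosure k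
  let G : MvPolynomial (Fin (2 * m + 1 + 1)) K := MvPolynomial.map (algebraMap k K) F
  have hG : G.IsHomogeneous d := hF.map _
  have ev : ∀ (v : Fin (2 * m + 1 + 1) → K) (P : MvPolynomial (Fin (2 * m + 1 + 1)) k),
      MvPolynomial.aeval v P = MvPolynomial.eval v (MvPolynomial.map (algebraMap k K) P) := by
    intro v P
    rw [MvPolynomial.eval_map, MvPolynomial.aeval_def]
  let S : (Fin (m + 1) ⊕ Fin (m + 1) ≃ Fin (2 * m + 1 + 1)) → Set (Fin (m + 1) × Fin (m + 1) → K) :=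
    fun e => {A | ∀ t, MvPolynomial.eval (S9.gpt A t) (MvPolynomial.rename e.symm G) = 0 ∧
      (t ≠ 0 → ∃ c, MvPolynomial.eval (S9.gpt A t)
        (MvPolynomial.pderiv c (MvPolynomial.rename e.symm G)) ≠ 0)}
  have hS : ∀ e, (S e).Finite := fun e =>
    S9.finite_graph _ d hd (hG.rename_isHomogeneous)
  let E : (Fin (m + 1) ⊕ Fin (m + 1) ≃ Fin (2 * m + 1 + 1)) → (Fin (m + 1) × Fin (m + 1) → K) →
      Submodule K (Fin (2 * m + 1 + 1) → K) :=
    fun e A => Submodule.span K (Set.range fun t => S9.gpt A t ∘ e.symm)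
  refine (Set.finite_iUnion fun e => (hS e).image (E e)).subset ?_
  rintro W ⟨hW, hWF⟩
  obtain ⟨e, A, hA⟩ := S9.exists_chart (by omega) W hW
  refine Set.mem_iUnion.mpr ⟨e, A, ?_, ?_⟩
  · intro t
    by_cases ht : t = 0
    · refine ⟨?_, fun h => absurd ht h⟩
      have h0 : S9.gpt A t = 0 := by
        subst ht
        ext c
        rcases c with j | i <;> simp [S9.gpt]
      rw [h0, MvPolynomial.eval_zero]
      rw [MvPolynomial.constantCoeff_eq]
      exact (hG.rename_isHomogeneous).coeff_eq_zero (by simp; omega)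
    · have hv0 : S9.gpt A t ∘ e.symm ≠ 0 := by
        intro h
        apply ht
        ext j
        have := congrFun h (e (Sum.inl j))
        simpa [S9.gpt] using this
      obtain ⟨h1, i, h2⟩ := hWF _ ((hA _).2 ⟨t, rfl⟩) hv0
      rw [ev] at h1 h2
      refine ⟨by rwa [MvPolynomial.eval_rename], fun _ => ⟨e.symm i, ?_⟩⟩
      rw [MvPolynomial.pderiv_rename e.symm.injective, MvPolynomial.eval_rename,
        MvPolynomial.pderiv_map]
      exact h2
  · apply le_antisymm
    · refine Submodule.span_le.mpr ?_
      rintro _ ⟨t, rfl⟩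
      exact (hA _).2 ⟨t, rfl⟩
    · intro v hv
      obtain ⟨t, rfl⟩ := (hA v).1 hv
      exact Submodule.subset_span ⟨t, rfl⟩
end

section
/- Let d ≥ 3 and n ≥ 5, and let X ⊂ P^n be a non-singular hypersurface of degree d. Then for every line L ∈ F_1(X) and every subvariety Z ⊆ F_2(X), one has dim C_L(Z) ≤ n − 3; equivalently, the variety Z_L = {P ∈ Z : L ⊂ P} of planes in Z containing L satisfies dim Z_L ≤ n − 5. -/
noncomputable section

abbrev KK : Type := AlgebraicClosure ℚ

abbrev Pn (N : ℕ) := Projectivization KK (Fin (N + 1) → KK)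

/-- The common zero set in projective space of a family of polynomials
(membership tested on the chosen representative). -/
def projZeros {N : ℕ} (S : Set (MvPolynomial (Fin (N + 1)) KK)) : Set (Pn N) :=
  {x | ∀ f ∈ S, MvPolynomial.eval x.rep f = 0}

/-- Zariski-closed subsets of projective space: common zero sets of families of forms. -/
def ProjClosed {N : ℕ} (V : Set (Pn N)) : Prop :=
  ∃ S : Set (MvPolynomial (Fin (N + 1)) KK),
    (∀ f ∈ S, ∃ d, f.IsHomogeneous d) ∧ V = projZeros S

def ProjIrred {N : ℕ} (V : Set (Pn N)) : Prop :=
  V.Nonempty ∧ ∀ C₁ C₂ : Set (Pn N), ProjClosed C₁ → ProjClosed C₂ →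
    V ⊆ C₁ ∪ C₂ → V ⊆ C₁ ∨ V ⊆ C₂

/-- A (geometrically integral) projective variety: an irreducible Zariski-closed set. -/
def ProjVariety {N : ℕ} (V : Set (Pn N)) : Prop := ProjClosed V ∧ ProjIrred V

/-- Dimension of a subset of projective space: Krull dimension of the poset of
irreducible closed subsets contained in it. The empty set has dimension `⊥`. -/
def projDim {N : ℕ} (V : Set (Pn N)) : WithBot ENat :=
  Order.krullDim {W : Set (Pn N) // ProjVariety W ∧ W ⊆ V}

/-- The set of projective points lying on a linear subspace. -/
def planeSet {N : ℕ} (W : Submodule KK (Fin (N + 1) → KK)) : Set (Pn N) :=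
  {x | x.rep ∈ W}

/-- Degree of a subset of projective space: the largest (finite) number of points
in a linear section. -/
def projDeg {N : ℕ} (V : Set (Pn N)) : ℕ :=
  sSup {k : ℕ | ∃ W : Submodule KK (Fin (N + 1) → KK),
    (V ∩ planeSet W).Finite ∧ (V ∩ planeSet W).ncard = k}

/-- The hypersurface cut out by a form. -/
def hyp {n : ℕ} (F : MvPolynomial (Fin (n + 1)) KK) : Set (Pn n) :=
  {x | MvPolynomial.eval x.rep F = 0}

/-- A form over the algebraic closure is non-singular if its partial derivatives
have no common non-trivial zero. -/
def NonsingularK {n : ℕ} (F : MvPolynomial (Fin (n + 1)) KK) : Prop :=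
  ∀ z : Fin (n + 1) → KK,
    (∀ i, MvPolynomial.eval z (MvPolynomial.pderiv i F) = 0) → z = 0

/-- The Fano set of (projective) m-planes contained in X, as linear subspaces of
dimension m+1. -/
def Fano (m n : ℕ) (X : Set (Pn n)) : Set (Submodule KK (Fin (n + 1) → KK)) :=
  {W | Module.finrank KK W = m + 1 ∧ planeSet W ⊆ X}

/-- Closed subsets of the Grassmannian of m-planes in Pⁿ, described via Stiefel
coordinates: Z is closed iff the set of (m+1)-tuples of vectors which, when
linearly independent, span a member of Z, is Zariski-closed in affine space. -/
def GrClosed (m n : ℕ) (Z : Set (Submodule KK (Fin (n + 1) → KK))) : Prop :=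
  (∀ W ∈ Z, Module.finrank KK W = m + 1) ∧
  ∃ S : Set (MvPolynomial (Fin (m + 1) × Fin (n + 1)) KK),
    {v : Fin (m + 1) → Fin (n + 1) → KK |
      LinearIndependent KK v → Submodule.span KK (Set.range v) ∈ Z}
    = {v | ∀ f ∈ S, MvPolynomial.eval (fun p => v p.1 p.2) f = 0}

def GrIrred (m n : ℕ) (Z : Set (Submodule KK (Fin (n + 1) → KK))) : Prop :=
  Z.Nonempty ∧ ∀ C₁ C₂ : Set (Submodule KK (Fin (n + 1) → KK)),
    GrClosed m n C₁ → GrClosed m n C₂ → Z ⊆ C₁ ∪ C₂ → Z ⊆ C₁ ∨ Z ⊆ C₂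

/-- A (geometrically integral) subvariety of the Grassmannian. -/
def GrVariety (m n : ℕ) (Z : Set (Submodule KK (Fin (n + 1) → KK))) : Prop :=
  GrClosed m n Z ∧ GrIrred m n Z

/-- Dimension of a subset of the Grassmannian of m-planes in Pⁿ. -/
def grDim (m n : ℕ) (Z : Set (Submodule KK (Fin (n + 1) → KK))) : WithBot ENat :=
  Order.krullDim {W : Set (Submodule KK (Fin (n + 1) → KK)) // GrVariety m n W ∧ W ⊆ Z}

/-- D(Z): the union of the planes parametrised by Z. -/
def DSet {n : ℕ} (Z : Set (Submodule KK (Fin (n + 1) → KK))) : Set (Pn n) :=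
  {x | ∃ Λ ∈ Z, x.rep ∈ Λ}

/-- A primitive integer vector: the gcd of its coordinates is 1. -/
def IsPrimitiveVec {n : ℕ} (x : Fin n → ℤ) : Prop := Finset.univ.gcd x = 1

/-- Height of an integer vector: the maximum modulus of its coordinates. -/
def heightVec {n : ℕ} (x : Fin n → ℤ) : ℝ :=
  ((Finset.univ.sup fun i => (x i).natAbs : ℕ) : ℝ)

def coeK {n : ℕ} (x : Fin n → ℤ) : Fin n → KK := fun i => ((x i : ℤ) : KK)

def coeQ {n : ℕ} (x : Fin n → ℤ) : Fin n → ℚ := fun i => ((x i : ℤ) : ℚ)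

/-- The number of rational points of height at most B on a subset V of projective
space, counted via primitive integer vectors (each projective rational point
corresponds to exactly two primitive vectors). -/
def NV {n : ℕ} (V : Set (Pn n)) (B : ℝ) : ℕ :=
  Set.ncard {x : Fin (n + 1) → ℤ | IsPrimitiveVec x ∧ heightVec x ≤ B ∧
    ∃ h : coeK x ≠ 0, Projectivization.mk KK (coeK x) h ∈ V}

/-- An integer form is non-singular if its partial derivatives have no common
non-trivial zero over the algebraic closure of ℚ. -/
def NonsingularZ {n : ℕ} (F : MvPolynomial (Fin (n + 1)) ℤ) : Prop :=
  ∀ z : Fin (n + 1) → KK,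
    (∀ i, MvPolynomial.aeval z (MvPolynomial.pderiv i F) = 0) → z = 0

/-- Base change of an integer polynomial to the algebraic closure of ℚ. -/
def mapK {n : ℕ} (F : MvPolynomial (Fin (n + 1)) ℤ) : MvPolynomial (Fin (n + 1)) KK :=
  MvPolynomial.map (Int.castRingHom KK) F

/-- The Plücker height of the rational m-plane spanned by the integer vectors v:
the maximum modulus of the (m+1)×(m+1) minors, divided by their gcd. -/
def pluckerHeight {m n : ℕ} (v : Fin (m + 1) → Fin (n + 1) → ℤ) : ℕ :=
  (Finset.univ.sup fun s : Fin (m + 1) → Fin (n + 1) =>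
    (Matrix.det (Matrix.of fun i j => v i (s j))).natAbs) /
  (Finset.univ.gcd fun s : Fin (m + 1) → Fin (n + 1) =>
    (Matrix.det (Matrix.of fun i j => v i (s j))).natAbs)

def betaExp (k : ℕ) : ℝ := if k ≤ 3 then 0 else 1/4

def sigmaExp (n k : ℕ) : ℝ :=
  if (k : ℝ) ≤ ((n : ℝ) - 1) / 2 then (k : ℝ) + 1 else (k : ℝ) + betaExp k

def tauExp (n k : ℕ) : ℝ :=
  if (k : ℝ) < ((n : ℝ) - 1) / 2 then (k : ℝ) + 1 else (k : ℝ) + betaExp k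

/-- E: the union of the (n-1)/2-planes contained in X (for n odd; empty for n even). -/
def bigE {n : ℕ} (X : Set (Pn n)) : Set (Pn n) :=
  {x | n % 2 = 1 ∧ ∃ W : Submodule KK (Fin (n + 1) → KK),
    Module.finrank KK W = (n - 1) / 2 + 1 ∧ planeSet W ⊆ X ∧ x ∈ planeSet W}

/-- The cone of lines contained in X passing through x. -/
def coneOfLines {n : ℕ} (X : Set (Pn n)) (x : Pn n) : Set (Pn n) :=
  {y | ∃ L : Submodule KK (Fin (n + 1) → KK),
    Module.finrank KK L = 2 ∧ planeSet L ⊆ X ∧ x.rep ∈ L ∧ y.rep ∈ L}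


open MvPolynomial in
lemma aux_height_ge (N : ℕ) (m : PrimeSpectrum (MvPolynomial (Fin N) KK))
    (hm : ∀ i, (X i : MvPolynomial (Fin N) KK) ∈ m.asIdeal) :
    (N : ℕ∞) ≤ Order.height m := by
  let φ : ℕ → (MvPolynomial (Fin N) KK →ₐ[KK] MvPolynomial (Fin N) KK) :=
    fun i => aeval (fun j : Fin N => if (j : ℕ) < i then 0 else X j)
  let J : ℕ → PrimeSpectrum (MvPolynomial (Fin N) KK) := fun i =>
    ⟨RingHom.ker (φ i), RingHom.ker_isPrime _⟩
  have key : ∀ (i : ℕ) (K : Ideal (MvPolynomial (Fin N) KK)),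
      (∀ j : Fin N, (j : ℕ) < i → X j ∈ K) → (J i).asIdeal ≤ K := by
    intro i K hK f hf
    have hf' : φ i f = 0 := hf
    have h : (Ideal.Quotient.mkₐ KK K).comp (φ i) = Ideal.Quotient.mkₐ KK K := by
      ext j
      simp only [φ, AlgHom.comp_apply, aeval_X]
      split_ifs with h
      · rw [map_zero]
        exact (Ideal.Quotient.eq_zero_iff_mem.2 (hK j h)).symm
      · rfl
    have h2 := DFunLike.congr_fun h f
    rw [AlgHom.comp_apply, hf', map_zero] at h2
    exact Ideal.Quotient.eq_zero_iff_mem.1 h2.symm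
  have hmem : ∀ (i : ℕ) (j : Fin N), X j ∈ (J i).asIdeal ↔ (j : ℕ) < i := by
    intro i j
    change φ i (X j) = 0 ↔ _
    simp only [φ, aeval_X]
    split_ifs with h <;> simp [h]
  have hstep : StrictMono (fun i : Fin (N + 1) => J i) := by
    rw [Fin.strictMono_iff_lt_succ]
    intro i
    refine lt_of_le_of_ne ?_ ?_
    · refine key _ _ ?_
      intro j hj
      rw [hmem]
      simp at hj ⊢
      omega
    · intro h
      have h1 := (hmem (i.succ : Fin (N+1)) i).2 (by simp)
      rw [← h, hmem] at h1
      simp at h1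
  let p : LTSeries (PrimeSpectrum (MvPolynomial (Fin N) KK)) := LTSeries.mk N _ hstep
  have : p.last ≤ m := key _ _ (fun j _ => hm j)
  exact Order.length_le_height (p := p) this

open MvPolynomial in
lemma aux_common_zero (N : ℕ) (s : Finset (MvPolynomial (Fin N) KK)) (hs : s.card < N)
    (h0 : ∀ f ∈ s, eval 0 f = 0) : ∃ v : Fin N → KK, v ≠ 0 ∧ ∀ f ∈ s, eval v f = 0 := by
  by_contra! hcon
  let I : Ideal (MvPolynomial (Fin N) KK) := Ideal.span (s : Set _)
  have hz : zeroLocus KK I = {0} := by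
    rw [zeroLocus_span]
    ext v
    simp only [Set.mem_setOf_eq, Set.mem_singleton_iff]
    constructor
    · intro hv
      by_contra hne
      obtain ⟨f, hf, hfv⟩ := hcon v hne
      exact hfv (by simpa [aeval_eq_eval] using hv f hf)
    · rintro rfl f hf
      simpa [aeval_eq_eval] using h0 f hf
  have hrad : (vanishingIdeal KK {(0 : Fin N → KK)} : Ideal (MvPolynomial (Fin N) KK))
      = I.radical := by
    rw [← hz, vanishingIdeal_zeroLocus_eq_radical]
  have hprime : (vanishingIdeal KK {(0 : Fin N → KK)} :
    Ideal (MvPolynomial (Fin N) KK)).IsPrime := inferInstance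
  have hmin : (vanishingIdeal KK {(0 : Fin N → KK)} : Ideal (MvPolynomial (Fin N) KK))
      ∈ I.minimalPrimes := by
    refine ⟨⟨hprime, ?_⟩, ?_⟩
    · rw [hrad]; exact Ideal.le_radical
    · rintro q ⟨hq, hIq⟩ _
      rw [hrad]
      exact hq.radical_le_iff.2 hIq
  have h1 := Ideal.height_le_card_of_mem_minimalPrimes_span_finset hmin
  have h2 := aux_height_ge N ⟨_, hprime⟩ (fun i => by
    change X i ∈ vanishingIdeal KK {(0 : Fin N → KK)}
    rw [mem_vanishingIdeal_singleton_iff]; simp)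
  rw [← PrimeSpectrum.height_eq_orderHeight] at h2
  have h3 := h2.trans h1
  have : N ≤ s.card := by exact_mod_cast h3
  omega

lemma aux_eval_smul {N d : ℕ} (F : MvPolynomial (Fin N) KK) (hF : F.IsHomogeneous d)
    (c : KK) (v : Fin N → KK) :
    MvPolynomial.eval (c • v) F = c ^ d * MvPolynomial.eval v F := by
  rw [MvPolynomial.eval_eq, MvPolynomial.eval_eq, Finset.mul_sum]
  refine Finset.sum_congr rfl (fun m hm => ?_)
  have h := hF (MvPolynomial.mem_support_iff.1 hm)
  rw [Finsupp.weight_apply, Finsupp.sum] at h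
  simp only [Pi.smul_apply, smul_eq_mul, mul_pow, Finset.prod_mul_distrib, Finset.prod_pow_eq_pow_sum]
  simp at h
  rw [h]; ring

open MvPolynomial in
lemma aux_deriv {N : ℕ} (F : MvPolynomial (Fin N) KK) (v y : Fin N → KK) :
    Polynomial.eval 0 (Polynomial.derivative
      (aeval (fun i => Polynomial.C (v i) + Polynomial.C (y i) * Polynomial.X) F))
      = ∑ i, y i * eval v (pderiv i F) := by
  induction F using MvPolynomial.induction_on with
  | C a => simp [Polynomial.algebraMap_eq]
  | add p q hp hq => simp [hp, hq, mul_add, Finset.sum_add_distrib]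
  | mul_X p j hp =>
    have he : Polynomial.eval 0
      (aeval (fun i => Polynomial.C (v i) + Polynomial.C (y i) * Polynomial.X) p) = eval v p := by
      have : (Polynomial.aeval (0 : KK)).comp
        (aeval (fun i => Polynomial.C (v i) + Polynomial.C (y i) * Polynomial.X))
        = (aeval v : MvPolynomial (Fin N) KK →ₐ[KK] KK) := by
        ext i; simp
      have h := DFunLike.congr_fun this p
      simpa [aeval_eq_eval, Polynomial.coe_aeval_eq_eval] using h
    simp only [map_mul, aeval_X, Polynomial.derivative_mul, Polynomial.eval_add,
      Polynomial.eval_mul, hp, he, pderiv_mul, map_add, eval_X]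
    simp only [Polynomial.derivative_add, Polynomial.derivative_C, Polynomial.derivative_mul,
      Polynomial.derivative_X, Polynomial.eval_add, Polynomial.eval_mul, Polynomial.eval_C,
      Polynomial.eval_X, Polynomial.eval_zero, mul_add, Finset.sum_add_distrib, pderiv_X]
    simp [Pi.single_apply, Finset.sum_mul, apply_ite]
    ring_nf
    rw [add_comm]
    congr 1
    exact Finset.sum_congr rfl (fun x _ => by ring)

/-- F vanishing on a subspace: derivatives along the subspace vanish. -/
lemma aux_deriv_zero {N : ℕ} (F : MvPolynomial (Fin N) KK) (P : Submodule KK (Fin N → KK))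
    (hP : ∀ v ∈ P, MvPolynomial.eval v F = 0) (v y : Fin N → KK) (hv : v ∈ P) (hy : y ∈ P) :
    ∑ i, y i * MvPolynomial.eval v (MvPolynomial.pderiv i F) = 0 := by
  rw [← aux_deriv]
  have : MvPolynomial.aeval
      (fun i => Polynomial.C (v i) + Polynomial.C (y i) * Polynomial.X) F = 0 := by
    apply Polynomial.funext
    intro t
    have h1 : (Polynomial.aeval t).comp
        (MvPolynomial.aeval (fun i => Polynomial.C (v i) + Polynomial.C (y i) * Polynomial.X))
        = (MvPolynomial.aeval (v + t • y) : MvPolynomial (Fin N) KK →ₐ[KK] KK) := by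
      ext i
      simp
      ring
    have h := DFunLike.congr_fun h1 F
    have h2 := hP _ (P.add_mem hv (P.smul_mem t hy))
    rw [Polynomial.eval_zero, ← h2]
    simpa [MvPolynomial.aeval_eq_eval, Polynomial.coe_aeval_eq_eval] using h
  rw [this]; simp

/-- vanishing on planeSet implies vanishing on the subspace -/
lemma aux_vanish {n d : ℕ} (hd : d ≠ 0) (F : MvPolynomial (Fin (n + 1)) KK)
    (hF : F.IsHomogeneous d) (P : Submodule KK (Fin (n + 1) → KK))
    (hP : planeSet P ⊆ hyp F) : ∀ v ∈ P, MvPolynomial.eval v F = 0 := by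
  intro v hv
  by_cases h0 : v = 0
  · subst h0
    have := aux_eval_smul F hF (0 : KK) 0
    simpa [hd] using this
  · obtain ⟨a, ha⟩ := Projectivization.exists_smul_eq_mk_rep KK v h0
    have h1 : Projectivization.mk KK v h0 ∈ planeSet P := by
      change (Projectivization.mk KK v h0).rep ∈ P
      rw [← ha]; exact P.smul_mem _ hv
    have h2 : MvPolynomial.eval (Projectivization.mk KK v h0).rep F = 0 := hP h1
    rw [← ha] at h2
    have h3 := aux_eval_smul F hF (a : KK) v
    have h4 : MvPolynomial.eval ((a : KK) • v) F = 0 := h2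
    rw [h4] at h3
    have := mul_eq_zero.1 h3.symm
    simpa using this

/-- The linear form with coefficient vector `a`. -/
def auxLin {N : ℕ} (a : Fin N → KK) : MvPolynomial (Fin N) KK :=
  ∑ i, MvPolynomial.C (a i) * MvPolynomial.X i

lemma auxLin_hom {N : ℕ} (a : Fin N → KK) : (auxLin a).IsHomogeneous 1 := by
  refine MvPolynomial.IsHomogeneous.sum _ _ _ (fun i _ => ?_)
  simpa using (MvPolynomial.isHomogeneous_C (Fin N) (a i)).mul (MvPolynomial.isHomogeneous_X KK i)

lemma auxLin_eval {N : ℕ} (a v : Fin N → KK) : MvPolynomial.eval v (auxLin a) = a ⬝ᵥ v := by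
  simp [auxLin, dotProduct]

/-- The substitution attached to a projection onto a linear subspace. -/
def auxSub {N : ℕ} (u a w b : Fin N → KK) :
    MvPolynomial (Fin N) KK →ₐ[KK] MvPolynomial (Fin N) KK :=
  MvPolynomial.aeval (fun i => MvPolynomial.X i - MvPolynomial.C (u i) * auxLin a
    - MvPolynomial.C (w i) * auxLin b)

lemma auxSub_lin {N : ℕ} (u a w b c : Fin N → KK) :
    auxSub u a w b (auxLin c) = auxLin c - MvPolynomial.C (c ⬝ᵥ u) * auxLin a
      - MvPolynomial.C (c ⬝ᵥ w) * auxLin b := by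
  rw [auxSub, show auxLin c = ∑ i, MvPolynomial.C (c i) * MvPolynomial.X i from rfl, map_sum]
  simp only [map_mul, MvPolynomial.aeval_X, MvPolynomial.aeval_C, MvPolynomial.algebraMap_eq,
    dotProduct, map_sum, Finset.sum_mul, ← Finset.sum_sub_distrib]
  exact Finset.sum_congr rfl (fun i _ => by ring)

lemma auxSub_ker {N : ℕ} (u a w b : Fin N → KK) (K : Ideal (MvPolynomial (Fin N) KK))
    (ha : u = 0 ∨ auxLin a ∈ K) (hb : w = 0 ∨ auxLin b ∈ K) :
    RingHom.ker (auxSub u a w b) ≤ K := by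
  intro f hf
  have hf' : auxSub u a w b f = 0 := hf
  have h : (Ideal.Quotient.mkₐ KK K).comp (auxSub u a w b) = Ideal.Quotient.mkₐ KK K := by
    ext j
    simp only [auxSub, AlgHom.comp_apply, MvPolynomial.aeval_X]
    have h1 : MvPolynomial.C (u j) * auxLin a ∈ K := by
      rcases ha with rfl | ha
      · simp
      · exact K.mul_mem_left _ ha
    have h2 : MvPolynomial.C (w j) * auxLin b ∈ K := by
      rcases hb with rfl | hb
      · simp
      · exact K.mul_mem_left _ hb
    refine Ideal.Quotient.eq.2 ?_
    have := K.neg_mem (K.add_mem h1 h2)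
    convert this using 1
    ring
  have h2 := DFunLike.congr_fun h f
  rw [AlgHom.comp_apply, hf', map_zero] at h2
  exact Ideal.Quotient.eq_zero_iff_mem.1 h2.symm

lemma auxSub_eval {N : ℕ} (u a w b y : Fin N → KK) (ha : a ⬝ᵥ y = 0) (hb : b ⬝ᵥ y = 0)
    (f : MvPolynomial (Fin N) KK) (hf : auxSub u a w b f = 0) : MvPolynomial.eval y f = 0 := by
  have h : (MvPolynomial.aeval y).comp (auxSub u a w b)
      = (MvPolynomial.aeval y : MvPolynomial (Fin N) KK →ₐ[KK] KK) := by
    ext j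
    simp [auxSub, MvPolynomial.aeval_eq_eval, auxLin_eval, ha, hb]
  have h2 := DFunLike.congr_fun h f
  rw [AlgHom.comp_apply, hf, map_zero] at h2
  simpa [MvPolynomial.aeval_eq_eval] using h2.symm

lemma auxLin_ne {N : ℕ} (a u : Fin N → KK) (h : a ⬝ᵥ u = 1) : auxLin a ≠ 0 := by
  intro h0
  have := auxLin_eval a u
  rw [h0, h] at this
  simp at this

/-- gradient -/
def auxGrad {N : ℕ} (F : MvPolynomial (Fin N) KK) (v : Fin N → KK) : Fin N → KK :=
  fun i => MvPolynomial.eval v (MvPolynomial.pderiv i F)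

/-- derivative in the direction `u` -/
def auxDir {N : ℕ} (F : MvPolynomial (Fin N) KK) (u : Fin N → KK) : MvPolynomial (Fin N) KK :=
  ∑ i, MvPolynomial.C (u i) * MvPolynomial.pderiv i F

lemma auxDir_hom {N d : ℕ} (F : MvPolynomial (Fin N) KK) (hF : F.IsHomogeneous d)
    (u : Fin N → KK) : (auxDir F u).IsHomogeneous (d - 1) := by
  refine MvPolynomial.IsHomogeneous.sum _ _ _ (fun i _ => ?_)
  simpa using (MvPolynomial.isHomogeneous_C (Fin N) (u i)).mul (hF.pderiv (i := i))

lemma auxDir_eval {N : ℕ} (F : MvPolynomial (Fin N) KK) (u v : Fin N → KK) :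
    MvPolynomial.eval v (auxDir F u) = auxGrad F v ⬝ᵥ u := by
  simp [auxDir, auxGrad, dotProduct, mul_comm]

lemma aux_eval_zero {N d : ℕ} (F : MvPolynomial (Fin N) KK) (hF : F.IsHomogeneous d)
    (hd : d ≠ 0) : MvPolynomial.eval 0 F = 0 := by
  have := aux_eval_smul F hF (0 : KK) 0
  simpa [hd] using this

lemma aux_exists_dual {N : ℕ} (a : Fin N → KK) (ha : a ≠ 0) : ∃ u, a ⬝ᵥ u = 1 := by
  obtain ⟨i, hi⟩ := Function.ne_iff.1 ha
  refine ⟨Pi.single i (a i)⁻¹, ?_⟩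
  rw [dotProduct_single]
  exact mul_inv_cancel₀ hi

lemma aux_geo {n d : ℕ} (hd : 3 ≤ d) (F : MvPolynomial (Fin (n + 1)) KK)
    (hF : F.IsHomogeneous d) (hns : NonsingularK F)
    (L : Submodule KK (Fin (n + 1) → KK)) (hL : Module.finrank KK L = 2) :
    ∃ v₀ ∈ L, ∃ v₁ ∈ L, ∃ u w : Fin (n + 1) → KK,
      auxGrad F v₀ ⬝ᵥ u = 1 ∧ auxGrad F v₀ ⬝ᵥ w = 0 ∧
      auxGrad F v₁ ⬝ᵥ u = 0 ∧ auxGrad F v₁ ⬝ᵥ w = 1 := by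
  have hg : ∀ v, v ≠ 0 → auxGrad F v ≠ 0 := fun v hv h =>
    hv (hns v (fun i => congrFun h i))
  let B := Module.finBasisOfFinrankEq KK L hL
  have hli : ∀ c : Fin 2 → KK, c ≠ 0 → (∑ j, c j • B j : L) ≠ 0 := by
    intro c hc h
    exact hc (funext (Fintype.linearIndependent_iff.1 B.linearIndependent c h))
  have hB0 : ((B 0 : L) : Fin (n + 1) → KK) ≠ 0 := by
    simpa using B.ne_zero 0
  obtain ⟨u, hu⟩ := aux_exists_dual _ (hg _ hB0)
  let G : MvPolynomial (Fin 2) KK := MvPolynomial.aeval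
    (fun i => ∑ j, MvPolynomial.C ((B j : Fin (n + 1) → KK) i) * MvPolynomial.X j) (auxDir F u)
  have hG : G.IsHomogeneous (1 * (d - 1)) := by
    refine (auxDir_hom F hF u).aeval _ (fun i => ?_)
    exact auxLin_hom (fun j => (B j : Fin (n + 1) → KK) i)
  obtain ⟨c, hc, hGc⟩ := aux_common_zero 2 {G} (by simp) (by
    intro f hf
    rw [Finset.mem_singleton.1 hf]
    exact aux_eval_zero G hG (by omega))
  have hGc := hGc G (by simp)
  let v₁ : L := ∑ j, c j • B j
  have hv₁ : (v₁ : Fin (n + 1) → KK) ≠ 0 := by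
    exact fun h => hli c hc (Subtype.ext h)
  have hu1 : auxGrad F v₁ ⬝ᵥ u = 0 := by
    rw [← auxDir_eval, ← hGc]
    have h : (MvPolynomial.aeval c).comp (MvPolynomial.aeval (R := KK)
        (fun i => ∑ j, MvPolynomial.C ((B j : Fin (n + 1) → KK) i) * MvPolynomial.X j))
        = (MvPolynomial.aeval (v₁ : Fin (n + 1) → KK) :
          MvPolynomial (Fin (n + 1)) KK →ₐ[KK] KK) := by
      ext i
      simp [v₁, mul_comm]
    have h2 := DFunLike.congr_fun h (auxDir F u)
    rw [AlgHom.comp_apply] at h2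
    exact h2.symm
  obtain ⟨w₀, hw₀⟩ := aux_exists_dual _ (hg _ hv₁)
  refine ⟨B 0, (B 0).2, v₁, v₁.2, u, w₀ - (auxGrad F (B 0 : L) ⬝ᵥ w₀) • u, hu, ?_, hu1, ?_⟩
  · simp [dotProduct_sub, dotProduct_smul, hu]
  · simp [dotProduct_sub, dotProduct_smul, hu1, hw₀]

lemma aux_notmem {n d : ℕ} (hn : 5 ≤ n) (hd : 3 ≤ d) (F : MvPolynomial (Fin (n + 1)) KK)
    (hF : F.IsHomogeneous d) (hns : NonsingularK F) (u a w b : Fin (n + 1) → KK)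
    (hau : a ⬝ᵥ u = 1) (haw : a ⬝ᵥ w = 0) (hbu : b ⬝ᵥ u = 0) (hbw : b ⬝ᵥ w = 1) :
    auxSub u a w b F ≠ 0 := by
  classical
  intro h0
  let M : Submodule KK (Fin (n + 1) → KK) :=
    { carrier := {y | a ⬝ᵥ y = 0 ∧ b ⬝ᵥ y = 0}
      add_mem' := fun {x y} hx hy => by
        constructor
        · rw [dotProduct_add, hx.1, hy.1, add_zero]
        · rw [dotProduct_add, hx.2, hy.2, add_zero]
      zero_mem' := by simp
      smul_mem' := fun c x hx => by
        constructor
        · rw [dotProduct_smul, hx.1, smul_zero]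
        · rw [dotProduct_smul, hx.2, smul_zero] }
  have hM : ∀ y ∈ M, MvPolynomial.eval y F = 0 := fun y hy =>
    auxSub_eval u a w b y hy.1 hy.2 F h0
  let s : Finset (MvPolynomial (Fin (n + 1)) KK) :=
    {auxLin a, auxLin b, auxDir F u, auxDir F w}
  have hs : s.card ≤ 4 := Finset.card_le_four
  obtain ⟨v, hv, hz⟩ := aux_common_zero (n + 1) s (by omega) (by
    intro f hf
    simp only [s, Finset.mem_insert, Finset.mem_singleton] at hf
    rcases hf with rfl | rfl | rfl | rfl
    · exact aux_eval_zero _ (auxLin_hom a) one_ne_zero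
    · exact aux_eval_zero _ (auxLin_hom b) one_ne_zero
    · exact aux_eval_zero _ (auxDir_hom F hF u) (by omega)
    · exact aux_eval_zero _ (auxDir_hom F hF w) (by omega))
  have h1 := hz (auxLin a) (by simp [s])
  have h2 := hz (auxLin b) (by simp [s])
  have h3 := hz (auxDir F u) (by simp [s])
  have h4 := hz (auxDir F w) (by simp [s])
  rw [auxLin_eval] at h1 h2
  rw [auxDir_eval] at h3 h4
  refine hv (hns v (fun i => ?_))
  have hy : Pi.single i 1 - a i • u - b i • w ∈ M := by
    constructor
    · simp [dotProduct_sub, dotProduct_smul, hau, haw]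
    · simp [dotProduct_sub, dotProduct_smul, hbu, hbw]
  have h5 := aux_deriv_zero F M hM v _ ⟨h1, h2⟩ hy
  have h6 : auxGrad F v ⬝ᵥ (Pi.single i 1 - a i • u - b i • w) = 0 := by
    rw [← h5]
    exact Finset.sum_congr rfl (fun j _ => mul_comm _ _)
  simpa [dotProduct_sub, dotProduct_smul, h3, h4, auxGrad] using h6

/-- The homogeneous ideal of a subset of projective space. -/
def auxI {n : ℕ} (W : Set (Pn n)) : Ideal (MvPolynomial (Fin (n + 1)) KK) :=
  Ideal.span {f | (∃ k, f.IsHomogeneous k) ∧ ∀ x ∈ W, MvPolynomial.eval x.rep f = 0}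

lemma auxI_vanish {n : ℕ} (W : Set (Pn n)) (f : MvPolynomial (Fin (n + 1)) KK)
    (hf : f ∈ auxI W) : ∀ x ∈ W, MvPolynomial.eval x.rep f = 0 := by
  intro x hx
  have : auxI W ≤ RingHom.ker (MvPolynomial.eval x.rep) :=
    Ideal.span_le.2 (fun g hg => hg.2 x hx)
  exact this hf

lemma auxI_mem {n : ℕ} (W : Set (Pn n)) (f : MvPolynomial (Fin (n + 1)) KK) (k : ℕ)
    (hk : f.IsHomogeneous k) (hf : ∀ x ∈ W, MvPolynomial.eval x.rep f = 0) : f ∈ auxI W :=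
  Ideal.subset_span ⟨⟨k, hk⟩, hf⟩

attribute [local instance] MvPolynomial.gradedAlgebra in
lemma auxI_prime {n : ℕ} (W : Set (Pn n)) (hW : ProjVariety W) : (auxI W).IsPrime := by
  have hhom : (auxI W).IsHomogeneous (MvPolynomial.homogeneousSubmodule (Fin (n + 1)) KK) :=
    Ideal.homogeneous_span _ _ (fun f hf => hf.1)
  refine hhom.isPrime_of_homogeneous_mem_or_mem ?_ ?_
  · obtain ⟨x, hx⟩ := hW.2.1
    intro h
    have := auxI_vanish W 1 (h ▸ Submodule.mem_top) x hx
    simp at this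
  · rintro f g ⟨i, hi⟩ ⟨j, hj⟩ hfg
    have hv := auxI_vanish W _ hfg
    have hcl : ∀ (f : MvPolynomial (Fin (n + 1)) KK) (i : ℕ), f.IsHomogeneous i →
        ProjClosed (projZeros {f}) := fun f i hi =>
      ⟨{f}, fun g hg => ⟨i, by rw [Set.mem_singleton_iff.1 hg]; exact hi⟩, rfl⟩
    rcases hW.2.2 _ _ (hcl f i hi) (hcl g j hj) (fun x hx => by
      have := hv x hx
      rw [map_mul] at this
      rcases mul_eq_zero.1 this with h | h
      · exact Or.inl (fun f' hf' => by rw [Set.mem_singleton_iff.1 hf']; exact h)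
      · exact Or.inr (fun f' hf' => by rw [Set.mem_singleton_iff.1 hf']; exact h)) with h | h
    · exact Or.inl (auxI_mem W f i hi (fun x hx => h hx f rfl))
    · exact Or.inr (auxI_mem W g j hj (fun x hx => h hx g rfl))

lemma auxI_lt {n : ℕ} {W W' : Set (Pn n)} (hW : ProjVariety W) (h : W < W') :
    auxI W' < auxI W := by
  refine lt_of_le_of_ne ?_ ?_
  · exact Ideal.span_mono (fun f hf => ⟨hf.1, fun x hx => hf.2 x (h.le hx)⟩)
  · intro he
    refine h.not_ge ?_
    obtain ⟨S, hS, hWS⟩ := hW.1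
    intro x hx
    rw [hWS]
    intro f hf
    obtain ⟨k, hk⟩ := hS f hf
    have h1 : f ∈ auxI W := auxI_mem W f k hk (fun y hy => by
      rw [hWS] at hy
      exact hy f hf)
    rw [← he] at h1
    exact auxI_vanish W' f h1 x hx

lemma auxI_lt_max {n : ℕ} {W : Set (Pn n)} (hW : W.Nonempty) :
    auxI W < RingHom.ker (MvPolynomial.constantCoeff : MvPolynomial (Fin (n + 1)) KK →+* KK) := by
  obtain ⟨x, hx⟩ := hW
  refine lt_of_le_of_ne ?_ ?_
  · refine Ideal.span_le.2 ?_
    rintro f ⟨⟨k, hk⟩, hf⟩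
    by_contra hne
    have h0 : MvPolynomial.coeff 0 f ≠ 0 := hne
    have hk0 : k = 0 := by
      have := hk h0
      simpa using this.symm
    subst hk0
    have h2 := MvPolynomial.totalDegree_eq_zero_iff_eq_C.1
      (Nat.le_zero.1 hk.totalDegree_le)
    have h3 := hf x hx
    rw [h2, MvPolynomial.eval_C] at h3
    exact h0 h3
  · intro he
    refine x.rep_nonzero (funext fun i => ?_)
    have h1 : (MvPolynomial.X i : MvPolynomial (Fin (n + 1)) KK) ∈ auxI W := by
      rw [he]
      exact MvPolynomial.constantCoeff_X KK i
    simpa using auxI_vanish W _ h1 x hx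

lemma aux_main (d n : ℕ) (hd : 3 ≤ d) (hn : 5 ≤ n)
    (F : MvPolynomial (Fin (n + 1)) KK) (hF : F.IsHomogeneous d)
    (hns : NonsingularK F)
    (L : Submodule KK (Fin (n + 1) → KK)) (hL : L ∈ Fano 1 n (hyp F))
    (Z : Set (Submodule KK (Fin (n + 1) → KK)))
    (hZ : Z ⊆ Fano 2 n (hyp F))
    (p : LTSeries {W : Set (Pn n) //
      ProjVariety W ∧ W ⊆ {x : Pn n | ∃ P ∈ Z, L ≤ P ∧ x.rep ∈ P}}) :
    p.length + 3 ≤ n := by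
  obtain ⟨v₀, hv₀, v₁, hv₁, u, w, hau, haw, hbu, hbw⟩ := aux_geo hd F hF hns L hL.1
  set a := auxGrad F v₀ with ha
  set b := auxGrad F v₁ with hb
  let R := MvPolynomial (Fin (n + 1)) KK
  let q : LTSeries (PrimeSpectrum R) :=
    LTSeries.mk p.length (fun i => ⟨auxI (p i.rev).1, auxI_prime _ (p i.rev).2.1⟩) (by
      intro i j hij
      exact auxI_lt (p j.rev).2.1 (p.strictMono (Fin.rev_lt_rev.2 hij)))
  have hsub : ∀ x ∈ p.last.1, ∃ P ∈ Z, L ≤ P ∧ x.rep ∈ P := fun x hx => p.last.2.2 hx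
  have hhead : q.head.asIdeal = auxI p.last.1 := by
    change auxI (p (Fin.rev 0)).1 = _
    rw [Fin.rev_zero]; rfl
  have hlin : ∀ v ∈ L, auxLin (auxGrad F v) ∈ q.head.asIdeal := by
    intro v hv
    rw [hhead]
    refine auxI_mem _ _ 1 (auxLin_hom _) (fun x hx => ?_)
    obtain ⟨P, hP, hLP, hxP⟩ := hsub x hx
    have h := aux_deriv_zero F P (aux_vanish (by omega) F hF P (hZ hP).2) v x.rep (hLP hv) hxP
    rw [auxLin_eval, ← h]
    exact Finset.sum_congr rfl (fun j _ => mul_comm _ _)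
  have hFmem : F ∈ q.head.asIdeal := by
    rw [hhead]
    refine auxI_mem _ _ d hF (fun x hx => ?_)
    obtain ⟨P, hP, hLP, hxP⟩ := hsub x hx
    exact (hZ hP).2 hxP
  let J2 : PrimeSpectrum R := ⟨RingHom.ker (auxSub u a w b), RingHom.ker_isPrime _⟩
  let J1 : PrimeSpectrum R := ⟨RingHom.ker (auxSub u a 0 b), RingHom.ker_isPrime _⟩
  let J0 : PrimeSpectrum R := ⟨⊥, Ideal.isPrime_bot⟩
  let m : PrimeSpectrum R :=
    ⟨RingHom.ker (MvPolynomial.constantCoeff : R →+* KK), RingHom.ker_isPrime _⟩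
  have hb2 : auxLin b ∈ J2.asIdeal := by
    change auxSub u a w b (auxLin b) = 0
    rw [auxSub_lin, hbu, hbw]; simp
  have ha2 : auxLin a ∈ J2.asIdeal := by
    change auxSub u a w b (auxLin a) = 0
    rw [auxSub_lin, hau, haw]; simp
  have ha1 : auxLin a ∈ J1.asIdeal := by
    change auxSub u a 0 b (auxLin a) = 0
    rw [auxSub_lin, hau]; simp
  have hb1 : auxLin b ∉ J1.asIdeal := by
    change ¬ (auxSub u a 0 b (auxLin b) = 0)
    rw [auxSub_lin, hbu]
    simpa using auxLin_ne b w hbw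
  have h2q : J2 < q.head := by
    refine lt_of_le_of_ne (auxSub_ker _ _ _ _ _ (Or.inr (hlin _ hv₀)) (Or.inr (hlin _ hv₁))) ?_
    intro h
    rw [← h] at hFmem
    exact aux_notmem hn hd F hF hns u a w b hau haw hbu hbw hFmem
  have h12 : J1 < J2 := by
    refine lt_of_le_of_ne (auxSub_ker _ _ _ _ _ (Or.inr ha2) (Or.inl rfl)) ?_
    intro h
    rw [h] at hb1
    exact hb1 hb2
  have h01 : J0 < J1 := by
    refine lt_of_le_of_ne (bot_le : (⊥ : Ideal R) ≤ _) ?_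
    intro h
    rw [← h] at ha1
    exact auxLin_ne a u hau ha1
  have hqm : q.last < m := by
    exact auxI_lt_max (p (Fin.rev (Fin.last _))).2.1.2.1
  let q1 := q.cons J2 h2q
  let q2 := q1.cons J1 (by rw [RelSeries.head_cons]; exact h12)
  let q3 := q2.cons J0 (by rw [RelSeries.head_cons]; exact h01)
  let q4 := q3.snoc m (by simpa [q3, q2, q1] using hqm)
  have hlen : q4.length = p.length + 4 := by
    have h0 : q.length = p.length := rfl
    have e1 : q1.length = 0 + q.length + 1 := rfl
    have e2 : q2.length = 0 + q1.length + 1 := rfl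
    have e3 : q3.length = 0 + q2.length + 1 := rfl
    have e4 : q4.length = q3.length + 0 + 1 := rfl
    omega
  have h1 := Order.LTSeries.length_le_krullDim q4
  have h2 : Order.krullDim (PrimeSpectrum R) = ((n + 1 : ℕ) : WithBot ℕ∞) := by
    have := MvPolynomial.ringKrullDim_of_isNoetherianRing (R := KK) (ι := Fin (n + 1))
    rw [ringKrullDim_eq_zero_of_field] at this
    simpa [ringKrullDim] using this
  rw [h2, hlen] at h1
  have : p.length + 4 ≤ n + 1 := by exact_mod_cast h1
  omega

/-- **Lemma 8.** Let d ≥ 3, n ≥ 5 and let X ⊂ Pⁿ be a non-singular hypersurface of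
degree d.  Then for every line L ∈ F₁(X) and every subvariety Z ⊆ F₂(X) one has
dim C_L(Z) ≤ n - 3, where C_L(Z) is the union of the planes of Z containing L. -/
theorem statement10 (d n : ℕ) (hd : 3 ≤ d) (hn : 5 ≤ n)
    (F : MvPolynomial (Fin (n + 1)) KK) (hF : F.IsHomogeneous d)
    (hns : NonsingularK F)
    (L : Submodule KK (Fin (n + 1) → KK)) (hL : L ∈ Fano 1 n (hyp F))
    (Z : Set (Submodule KK (Fin (n + 1) → KK)))
    (hZc : GrClosed 2 n Z) (hZ : Z ⊆ Fano 2 n (hyp F)) :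
    projDim {x : Pn n | ∃ P ∈ Z, L ≤ P ∧ x.rep ∈ P} + ((3 : ENat) : WithBot ENat) ≤
      ((n : ENat) : WithBot ENat) := by
  have h : projDim {x : Pn n | ∃ P ∈ Z, L ≤ P ∧ x.rep ∈ P} ≤ (((n - 3 : ℕ) : ENat) : WithBot ENat) := by
    refine iSup_le (fun p => ?_)
    have := aux_main d n hd hn F hF hns L hL Z hZ p
    have h2 : p.length ≤ n - 3 := by omega
    exact_mod_cast h2
  refine (add_le_add_left h _).trans ?_
  have h3 : n - 3 + 3 = n := by omega
  have h4 : (((n - 3 : ℕ) : ENat) : WithBot ENat) + ((3 : ENat) : WithBot ENat)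
      = (((n - 3 + 3 : ℕ) : ENat) : WithBot ENat) := by
    push_cast; rfl
  rw [h4, h3]

end
end

section
/- Let X ⊂ P^n be a non-singular hypersurface of degree d ≥ 2 defined by a form F, and let L ⊂ X be a line contained in X. Then the tangent hyperplane to X is not constant along L: there exist distinct points x, y ∈ L with T_x(X) ≠ T_y(X). Equivalently, if x = [𝐱] and y = [𝐲] span L, then the gradient ∇F(λ𝐱 + μ𝐲) is not of the form h(λ,μ)·𝐯 for a fixed vector 𝐯 and a binary form h of degree d−1. -/
noncomputable section

theorem exists_zero_on_line {m e : ℕ} (he : e ≠ 0) (G : MvPolynomial (Fin m) KK)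
    (hG : G.IsHomogeneous e) (x y : Fin m → KK) (hx : MvPolynomial.eval x G ≠ 0) :
    MvPolynomial.eval y G = 0 ∨ ∃ s : KK, MvPolynomial.eval (x + s • y) G = 0 := by
  have hpoly : ∀ a b : Fin m → KK, ∃ q : Polynomial KK, ∀ s : KK,
      q.eval s = MvPolynomial.eval (a + s • b) G := by
    intro a b
    refine ⟨MvPolynomial.aeval
      (fun i => Polynomial.C (a i) + Polynomial.X * Polynomial.C (b i)) G, fun s => ?_⟩
    rw [← Polynomial.coe_evalRingHom, MvPolynomial.aeval_def, MvPolynomial.hom_eval₂,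
      MvPolynomial.eval, MvPolynomial.coe_eval₂Hom]
    congr 1
    · ext; simp
    · funext i; simp; exact mul_comm _ _
  have hsm : ∀ (t : KK) (z : Fin m → KK),
      MvPolynomial.eval (t • z) G = t ^ e * MvPolynomial.eval z G := by
    intro t z
    rw [MvPolynomial.eval_eq, MvPolynomial.eval_eq, Finset.mul_sum]
    refine Finset.sum_congr rfl fun u hu => ?_
    have hdeg := hG (MvPolynomial.mem_support_iff.mp hu)
    have : ∑ i ∈ u.support, u i = e := by
      rw [← hdeg, Finsupp.weight_apply, Finsupp.sum]; simp
    simp only [Pi.smul_apply, smul_eq_mul, mul_pow, Finset.prod_mul_distrib,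
      Finset.prod_pow_eq_pow_sum, this]
    ring
  obtain ⟨q, hq⟩ := hpoly x y
  obtain ⟨p, hp⟩ := hpoly y x
  by_cases hdq : q.degree = 0
  · left
    rw [Polynomial.eq_C_of_degree_eq_zero hdq] at hq
    set c := q.coeff 0
    simp only [Polynomial.eval_C] at hq
    have hpc : p = Polynomial.C c * Polynomial.X ^ e := by
      apply Polynomial.eq_of_infinite_eval_eq
      refine (Set.Finite.infinite_compl (Set.finite_singleton (0 : KK))).mono ?_
      intro t ht
      have ht0 : t ≠ 0 := by simpa using ht
      simp only [Set.mem_ofPred_eq, Polynomial.eval_mul, Polynomial.eval_C, Polynomial.eval_pow,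
        Polynomial.eval_X]
      rw [hp, hq t⁻¹, mul_comm, ← hsm, smul_add, smul_smul, mul_inv_cancel₀ ht0, one_smul,
        add_comm]
    have h0 := hp 0
    rw [hpc] at h0
    simpa [he] using h0.symm
  · right
    obtain ⟨s, hs⟩ := IsAlgClosed.exists_root q hdq
    exact ⟨s, by rw [← hq]; exact hs⟩

/-- **Claim in the proof of Lemma 8.** Let X ⊂ Pⁿ be a non-singular hypersurface of
degree d ≥ 2 defined by the form F and let L ⊂ X be a line contained in X.  Then
the tangent hyperplane to X is not constant along L: there are two points of L at
which the gradients ∇F are not proportional (in particular the gradient along L is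
not of the form h(λ,μ)·𝐯 for a fixed vector 𝐯). -/
theorem statement11 (d n : ℕ) (hd : 2 ≤ d)
    (F : MvPolynomial (Fin (n + 1)) KK) (hF : F.IsHomogeneous d)
    (hns : NonsingularK F)
    (L : Submodule KK (Fin (n + 1) → KK)) (hrk : Module.finrank KK L = 2)
    (hLX : planeSet L ⊆ hyp F) :
    ∃ v ∈ L, ∃ w ∈ L, LinearIndependent KK
      ![fun i => MvPolynomial.eval v (MvPolynomial.pderiv i F),
        fun i => MvPolynomial.eval w (MvPolynomial.pderiv i F)] := by
  have hL : ∃ x ∈ L, ∃ y ∈ L, LinearIndependent KK ![x, y] := by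
    let b := Module.finBasisOfFinrankEq KK L hrk
    refine ⟨b 0, (b 0).2, b 1, (b 1).2, ?_⟩
    have h := b.linearIndependent.map' L.subtype L.ker_subtype
    have e : (![(b 0 : Fin (n + 1) → KK), (b 1 : Fin (n + 1) → KK)]) = L.subtype ∘ b := by
      funext i
      fin_cases i <;> rfl
    rw [e]
    exact h
  obtain ⟨x, hxL, y, hyL, hxy⟩ := hL
  have hx0 : x ≠ 0 := hxy.ne_zero 0
  have hy0 : y ≠ 0 := hxy.ne_zero 1
  obtain ⟨j, hj⟩ : ∃ j, MvPolynomial.eval x (MvPolynomial.pderiv j F) ≠ 0 := by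
    by_contra! h
    exact hx0 (hns x h)
  have hz : ∃ z ∈ L, z ≠ 0 ∧ MvPolynomial.eval z (MvPolynomial.pderiv j F) = 0 := by
    rcases exists_zero_on_line (by omega : d - 1 ≠ 0) _ hF.pderiv x y hj with h | ⟨s, h⟩
    · exact ⟨y, hyL, hy0, h⟩
    · refine ⟨x + s • y, L.add_mem hxL (L.smul_mem s hyL), fun h0 => ?_, h⟩
      have := LinearIndependent.pair_iff.mp hxy 1 s (by simpa using h0)
      exact one_ne_zero this.1
  obtain ⟨z, hzL, hz0, hzj⟩ := hz
  obtain ⟨k, hk⟩ : ∃ k, MvPolynomial.eval z (MvPolynomial.pderiv k F) ≠ 0 := by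
    by_contra! h
    exact hz0 (hns z h)
  refine ⟨x, hxL, z, hzL, LinearIndependent.pair_iff.mpr fun a b hab => ?_⟩
  have h1 := congrFun hab j
  have h2 := congrFun hab k
  simp only [Pi.add_apply, Pi.smul_apply, smul_eq_mul, Pi.zero_apply] at h1 h2
  rw [hzj, mul_zero, add_zero] at h1
  have ha : a = 0 := (mul_eq_zero.mp h1).resolve_right hj
  rw [ha, zero_mul, zero_add] at h2
  exact ⟨ha, (mul_eq_zero.mp h2).resolve_right hk⟩

end
end

section
/- Let X ⊂ P^n be a non-singular hypersurface of degree d ≥ 2. Then for every m ≥ 1, every point x ∈ X and every subvariety Z ⊆ F_m(X), the cone C_x(Z) of m-planes of Z through x satisfies dim C_x(Z) ≤ n − 2. (This rests on the fact that a hypersurface of degree at least 2 which is a cone is singular at its vertex.) -/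
noncomputable section

open MvPolynomial in
/-- `f` restricted to the line through `v`, as a univariate polynomial. -/
def lineP {n : ℕ} (v : Fin (n + 1) → KK) (f : MvPolynomial (Fin (n + 1)) KK) : Polynomial KK :=
  aeval (fun i => Polynomial.C (v i) * Polynomial.X) f

lemma lineP_eval {n : ℕ} (v : Fin (n + 1) → KK) (f : MvPolynomial (Fin (n + 1)) KK) (t : KK) :
    (lineP v f).eval t = MvPolynomial.eval (t • v) f := by
  unfold lineP
  induction f using MvPolynomial.induction_on with
  | C a => simp
  | add p q hp hq => simp [hp, hq]
  | mul_X p i hp =>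
    rw [map_mul, Polynomial.eval_mul, hp, map_mul, MvPolynomial.aeval_X]
    simp only [Polynomial.eval_mul, Polynomial.eval_C, Polynomial.eval_X, MvPolynomial.eval_X,
      Pi.smul_apply, smul_eq_mul]
    ring

lemma lineP_zero_iff {n : ℕ} (v : Fin (n + 1) → KK) (f : MvPolynomial (Fin (n + 1)) KK) :
    lineP v f = 0 ↔ ∀ t : KK, MvPolynomial.eval (t • v) f = 0 := by
  constructor
  · intro h t
    rw [← lineP_eval, h, Polynomial.eval_zero]
  · intro h
    apply Polynomial.funext
    intro t
    rw [lineP_eval, h, Polynomial.eval_zero]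

lemma eval_smul_hom {n d : ℕ} {f : MvPolynomial (Fin (n + 1)) KK} (hf : f.IsHomogeneous d)
    (t : KK) (v : Fin (n + 1) → KK) :
    MvPolynomial.eval (t • v) f = t ^ d * MvPolynomial.eval v f := by
  rw [MvPolynomial.eval_eq', MvPolynomial.eval_eq', Finset.mul_sum]
  apply Finset.sum_congr rfl
  intro e he
  have h1 : ∑ i, e i = d := by
    have := hf (MvPolynomial.mem_support_iff.mp he)
    rw [← this, Finsupp.weight_apply, Finsupp.sum_fintype] <;> simp
  simp only [Pi.smul_apply, smul_eq_mul, mul_pow, Finset.prod_mul_distrib, Finset.prod_pow_eq_pow_sum, h1]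
  ring

lemma lineP_eq {n : ℕ} (v : Fin (n + 1) → KK) (f : MvPolynomial (Fin (n + 1)) KK) :
    lineP v f = ∑ k ∈ Finset.range (f.totalDegree + 1),
      Polynomial.C (MvPolynomial.eval v (MvPolynomial.homogeneousComponent k f)) *
        Polynomial.X ^ k := by
  apply Polynomial.funext
  intro t
  rw [lineP_eval]
  conv_lhs => rw [← MvPolynomial.sum_homogeneousComponent f]
  rw [map_sum, Polynomial.eval_finsetSum]
  apply Finset.sum_congr rfl
  intro k _
  rw [eval_smul_hom (MvPolynomial.homogeneousComponent_isHomogeneous k f)]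
  simp only [Polynomial.eval_mul, Polynomial.eval_C, Polynomial.eval_X, Polynomial.eval_pow]
  ring

lemma lineP_zero_iff' {n : ℕ} (v : Fin (n + 1) → KK) (f : MvPolynomial (Fin (n + 1)) KK) :
    lineP v f = 0 ↔
      ∀ k, MvPolynomial.eval v (MvPolynomial.homogeneousComponent k f) = 0 := by
  constructor
  · intro h k
    by_cases hk : f.totalDegree < k
    · rw [MvPolynomial.homogeneousComponent_eq_zero _ _ hk, map_zero]
    · have := congrArg (fun p => Polynomial.coeff p k) h
      simp only [lineP_eq, Polynomial.finsetSum_coeff, Polynomial.coeff_C_mul_X_pow,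
        Polynomial.coeff_zero] at this
      rw [Finset.sum_ite_eq, if_pos (by simp; omega)] at this
      exact this
  · intro h
    rw [lineP_eq]
    simp [h]

/-- The homogeneous vanishing ideal. -/
def vanI {n : ℕ} (W : Set (Pn n)) : Ideal (MvPolynomial (Fin (n + 1)) KK) where
  carrier := {f | ∀ y ∈ W, lineP y.rep f = 0}
  zero_mem' := by intro y _; simp [lineP]
  add_mem' := by
    intro a b ha hb y hy
    have h1 := ha y hy
    have h2 := hb y hy
    simp only [lineP] at *
    rw [map_add, h1, h2, add_zero]
  smul_mem' := by
    intro c a ha y hy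
    have h1 := ha y hy
    simp only [lineP] at *
    rw [smul_eq_mul, map_mul, h1, mul_zero]

lemma mem_vanI {n : ℕ} {W : Set (Pn n)} {f : MvPolynomial (Fin (n + 1)) KK} :
    f ∈ vanI W ↔ ∀ y ∈ W, lineP y.rep f = 0 := Iff.rfl

lemma closed_line {n : ℕ} (f : MvPolynomial (Fin (n + 1)) KK) :
    ProjClosed {y : Pn n | lineP y.rep f = 0} := by
  refine ⟨Set.range fun k => MvPolynomial.homogeneousComponent k f, ?_, ?_⟩
  · rintro _ ⟨k, rfl⟩
    exact ⟨k, MvPolynomial.homogeneousComponent_isHomogeneous k f⟩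
  · ext y
    simp [projZeros, lineP_zero_iff']

lemma vanI_prime {n : ℕ} {W : Set (Pn n)} (hW : ProjVariety W) : (vanI W).IsPrime := by
  obtain ⟨_, ⟨w, hw⟩, hirr⟩ := hW
  refine Ideal.isPrime_iff.mpr ⟨?_, ?_⟩
  · intro h
    have : (1 : MvPolynomial (Fin (n + 1)) KK) ∈ vanI W := by rw [h]; trivial
    have := this w hw
    simp [lineP] at this
  · intro f g hfg
    refine hirr _ _ (closed_line f) (closed_line g) ?_
    intro y hy
    have := hfg y hy
    simp only [lineP, map_mul, mul_eq_zero] at this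
    exact this

lemma vanI_lt {n : ℕ} {W₁ W₂ : Set (Pn n)} (h1 : ProjVariety W₁)
    (h : W₁ < W₂) : vanI W₂ < vanI W₁ := by
  refine lt_of_le_not_ge (fun f hf y hy => hf y (h.le hy)) ?_
  intro hle
  apply h.not_ge
  obtain ⟨⟨S, hS, rfl⟩, _⟩ := h1
  intro y hy f hf
  have : f ∈ vanI (projZeros S) := by
    intro z hz
    obtain ⟨d, hd⟩ := hS f hf
    rw [lineP_zero_iff]
    intro t
    rw [eval_smul_hom hd, hz f hf, mul_zero]
  have := (lineP_zero_iff _ _).mp (hle this y hy) 1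
  simpa using this

/-- ideal of the origin -/
def origI (n : ℕ) : Ideal (MvPolynomial (Fin (n + 1)) KK) :=
  RingHom.ker (MvPolynomial.eval (0 : Fin (n + 1) → KK))

lemma vanI_lt_orig {n : ℕ} {W : Set (Pn n)} (h : W.Nonempty) : vanI W < origI n := by
  obtain ⟨w, hw⟩ := h
  refine lt_of_le_not_ge ?_ ?_
  · intro f hf
    have := (lineP_zero_iff _ _).mp (hf w hw) 0
    simpa [origI, RingHom.mem_ker] using this
  · intro hle
    apply w.rep_nonzero
    funext i
    have : (MvPolynomial.X i : MvPolynomial (Fin (n + 1)) KK) ∈ origI n := by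
      simp [origI, RingHom.mem_ker]
    have := (lineP_zero_iff _ _).mp (hle this w hw) 1
    simpa using this

lemma plane_eval {n : ℕ} (a b : Fin (n + 1) → KK) (H : MvPolynomial (Fin (n + 1)) KK) (t : KK) :
    (MvPolynomial.aeval (fun i => Polynomial.C (a i) + Polynomial.C (b i) * Polynomial.X)
      H : Polynomial KK).eval t = MvPolynomial.eval (a + t • b) H := by
  induction H using MvPolynomial.induction_on with
  | C a => simp
  | add p q hp hq => simp [hp, hq]
  | mul_X p i hp =>
    rw [map_mul, Polynomial.eval_mul, hp, map_mul, MvPolynomial.aeval_X]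
    simp only [Polynomial.eval_mul, Polynomial.eval_add, Polynomial.eval_C, Polynomial.eval_X,
      MvPolynomial.eval_X, Pi.smul_apply, Pi.add_apply, smul_eq_mul]
    ring

/-- A form of positive degree has a nontrivial zero on a plane. -/
lemma exists_zero {n e : ℕ} (he : 1 ≤ e) {H : MvPolynomial (Fin (n + 1)) KK}
    (hH : H.IsHomogeneous e) (u v : Fin (n + 1) → KK) (huv : LinearIndependent KK ![u, v]) :
    ∃ s t : KK, s • u + t • v ≠ 0 ∧ MvPolynomial.eval (s • u + t • v) H = 0 := by
  have hne : ∀ s t : KK, (s ≠ 0 ∨ t ≠ 0) → s • u + t • v ≠ 0 := by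
    intro s t h h0
    have := LinearIndependent.pair_iff.mp huv s t h0
    tauto
  let P : (Fin (n + 1) → KK) → (Fin (n + 1) → KK) → Polynomial KK := fun a b =>
    MvPolynomial.aeval (fun i => Polynomial.C (a i) + Polynomial.C (b i) * Polynomial.X) H
  have hP : ∀ a b t, (P a b).eval t = MvPolynomial.eval (a + t • b) H := by
    intro a b t
    exact plane_eval a b H t
  by_cases hdeg : (P u v).degree = 0
  · obtain ⟨c, hc⟩ : ∃ c, P u v = Polynomial.C c := ⟨_, Polynomial.eq_C_of_degree_eq_zero hdeg⟩
    have hq : P v u = Polynomial.C c * Polynomial.X ^ e := by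
      apply Polynomial.eq_of_infinite_eval_eq
      refine Set.Infinite.mono (s := {0}ᶜ) ?_ (Set.finite_singleton _).infinite_compl
      intro t ht
      have ht : t ≠ 0 := ht
      have h1 : v + t • u = t • (u + t⁻¹ • v) := by
        rw [smul_add, smul_smul, mul_inv_cancel₀ ht, one_smul]
        exact add_comm _ _
      show (P v u).eval t = _
      rw [hP, h1, eval_smul_hom hH, ← hP, hc]
      simp only [Polynomial.eval_mul, Polynomial.eval_C, Polynomial.eval_X, Polynomial.eval_pow]
      ring
    refine ⟨0, 1, hne _ _ (by simp), ?_⟩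
    have := hP v u 0
    rw [hq] at this
    simp at this
    simp [← this]; omega
  · obtain ⟨t, ht⟩ := IsAlgClosed.exists_root _ hdeg
    refine ⟨1, t, hne _ _ (by simp), ?_⟩
    rw [one_smul, ← hP]; exact ht

lemma eval_plane {n d : ℕ} (hd : 1 ≤ d) {F : MvPolynomial (Fin (n + 1)) KK}
    (hF : F.IsHomogeneous d) {Λ : Submodule KK (Fin (n + 1) → KK)}
    (hΛ : planeSet Λ ⊆ hyp F) {z : Fin (n + 1) → KK} (hz : z ∈ Λ) :
    MvPolynomial.eval z F = 0 := by
  by_cases h0 : z = 0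
  · have := eval_smul_hom hF 0 z
    rw [zero_smul, zero_pow (by omega), zero_mul] at this
    rw [h0]; exact this
  · obtain ⟨a, ha⟩ := Projectivization.exists_smul_eq_mk_rep KK z h0
    have ha' : (a : KK) • z = (Projectivization.mk KK z h0).rep := ha
    have : Projectivization.mk KK z h0 ∈ hyp F := hΛ (by
      show (Projectivization.mk KK z h0).rep ∈ Λ
      rw [← ha']; exact Λ.smul_mem _ hz)
    have : MvPolynomial.eval (Projectivization.mk KK z h0).rep F = 0 := this
    rw [← ha', eval_smul_hom hF] at this
    exact (mul_eq_zero.mp this).resolve_left (pow_ne_zero _ a.ne_zero)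

lemma deriv_line {n : ℕ} (F : MvPolynomial (Fin (n + 1)) KK) (a b : Fin (n + 1) → KK)
    (h : ∀ t : KK, MvPolynomial.eval (a + t • b) F = 0) :
    ∑ i, MvPolynomial.eval a (MvPolynomial.pderiv i F) * b i = 0 := by
  let P : MvPolynomial (Fin (n + 1)) KK → Polynomial KK := fun H =>
    MvPolynomial.aeval (fun i => Polynomial.C (a i) + Polynomial.C (b i) * Polynomial.X) H
  have hP : ∀ H t, (P H).eval t = MvPolynomial.eval (a + t • b) H := by
    intro H t
    exact plane_eval a b H t
  have hD : ∀ H, (Polynomial.derivative (P H)).eval 0 =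
      ∑ i, MvPolynomial.eval a (MvPolynomial.pderiv i H) * b i := by
    intro H
    induction H using MvPolynomial.induction_on with
    | C a => simp [P]
    | add p q hp hq =>
      have : P (p + q) = P p + P q := by simp [P]
      simp [this, hp, hq, add_mul, Finset.sum_add_distrib]
    | mul_X p j hp =>
      have : P (p * MvPolynomial.X j) =
        P p * (Polynomial.C (a j) + Polynomial.C (b j) * Polynomial.X) := by simp [P]
      have h0 := hP p 0
      simp only [zero_smul, add_zero] at h0
      rw [this, Polynomial.derivative_mul, Polynomial.eval_add, Polynomial.eval_mul, hp,
        Polynomial.eval_mul, h0]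
      have e1 : ∀ i, MvPolynomial.eval a (MvPolynomial.pderiv i (p * MvPolynomial.X j)) * b i =
          MvPolynomial.eval a (MvPolynomial.pderiv i p) * b i * a j +
            (if i = j then MvPolynomial.eval a p * b j else 0) := by
        intro i
        rw [Derivation.leibniz, MvPolynomial.pderiv_X, smul_eq_mul, smul_eq_mul, map_add, map_mul,
          map_mul, MvPolynomial.eval_X]
        by_cases hij : i = j
        · subst hij
          rw [if_pos rfl, Pi.single_eq_same, map_one]
          ring
        · rw [if_neg hij, Pi.single_eq_of_ne (Ne.symm hij), map_zero]
          ring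
      rw [Finset.sum_congr rfl fun i _ => e1 i, Finset.sum_add_distrib, ← Finset.sum_mul,
        Finset.sum_ite_eq', if_pos (Finset.mem_univ _)]
      simp
  have : P F = 0 := Polynomial.funext fun t => by rw [hP, h]; simp
  rw [← hD, this]; simp

/-- Substitution eliminating one variable with a linear equation. -/
def elim {n : ℕ} (c : Fin (n + 1) → KK) (i₀ : Fin (n + 1)) :
    MvPolynomial (Fin (n + 1)) KK →ₐ[KK] MvPolynomial (Fin (n + 1)) KK :=
  MvPolynomial.aeval fun j => MvPolynomial.X j -
    (if j = i₀ then MvPolynomial.C (c i₀)⁻¹ * ∑ i, MvPolynomial.C (c i) * MvPolynomial.X i else 0)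

lemma elim_eval {n : ℕ} (c : Fin (n + 1) → KK) (i₀ : Fin (n + 1))
    (y : Fin (n + 1) → KK) (hy : ∑ i, c i * y i = 0) (f : MvPolynomial (Fin (n + 1)) KK) :
    MvPolynomial.eval y (elim c i₀ f) = MvPolynomial.eval y f := by
  unfold elim
  induction f using MvPolynomial.induction_on with
  | C a => simp
  | add p q hp hq => rw [map_add, map_add, hp, hq, map_add]
  | mul_X p j hp => 
    rw [map_mul, map_mul, hp, map_mul, MvPolynomial.aeval_X]
    split_ifs <;> simp [hy]

lemma elim_dvd {n : ℕ} (c : Fin (n + 1) → KK) (i₀ : Fin (n + 1))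
    (f : MvPolynomial (Fin (n + 1)) KK) :
    (∑ i, MvPolynomial.C (c i) * MvPolynomial.X i) ∣ f - elim c i₀ f := by
  unfold elim
  induction f using MvPolynomial.induction_on with
  | C a => simp
  | add p q hp hq => 
    rw [map_add, add_sub_add_comm]
    exact dvd_add hp hq
  | mul_X p j hp => 
    rw [map_mul, MvPolynomial.aeval_X, mul_sub, ← sub_add, ← sub_mul]
    refine dvd_add (hp.mul_right _) ?_
    apply Dvd.dvd.mul_left
    split_ifs
    · exact Dvd.intro_left _ rfl
    · simp

lemma elim_lin {n : ℕ} (c : Fin (n + 1) → KK) (i₀ : Fin (n + 1)) (h0 : c i₀ ≠ 0) :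
    elim c i₀ (∑ i, MvPolynomial.C (c i) * MvPolynomial.X i) = 0 := by
  unfold elim
  simp only [map_sum, map_mul, MvPolynomial.aeval_X, mul_sub, Finset.sum_sub_distrib]
  simp only [MvPolynomial.algHom_C, MvPolynomial.algebraMap_eq, mul_ite, mul_zero, Finset.sum_ite_eq', Finset.mem_univ, if_true]
  rw [← mul_assoc, ← map_mul, mul_inv_cancel₀ h0, map_one, one_mul, sub_self]

lemma lin_ne {n : ℕ} (c : Fin (n + 1) → KK) (i₀ : Fin (n + 1)) (h0 : c i₀ ≠ 0) :
    (∑ i, MvPolynomial.C (c i) * MvPolynomial.X i : MvPolynomial (Fin (n + 1)) KK) ≠ 0 := by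
  intro h
  have := congrArg (MvPolynomial.eval (Pi.single i₀ 1)) h
  simp [Pi.single_apply] at this
  exact h0 this

lemma chain_bound (d n m : ℕ) (hd : 2 ≤ d) (hm : 1 ≤ m)
    (F : MvPolynomial (Fin (n + 1)) KK) (hF : F.IsHomogeneous d)
    (hns : NonsingularK F) (x : Pn n)
    (Z : Set (Submodule KK (Fin (n + 1) → KK)))
    (hZ : Z ⊆ Fano m n (hyp F))
    (p : LTSeries {W : Set (Pn n) // ProjVariety W ∧
      W ⊆ {y : Pn n | ∃ Λ ∈ Z, x.rep ∈ Λ ∧ y.rep ∈ Λ}}) :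
    p.length + 2 ≤ n := by
  set c : Fin (n + 1) → KK := fun i => MvPolynomial.eval x.rep (MvPolynomial.pderiv i F) with hc
  obtain ⟨i₀, hi₀⟩ : ∃ i, c i ≠ 0 := by
    by_contra! h
    exact x.rep_nonzero (hns _ h)
  have hΛT : ∀ Λ ∈ Z, x.rep ∈ Λ → ∀ z ∈ Λ, ∑ i, c i * z i = 0 := by
    intro Λ hΛ hxΛ z hz
    apply deriv_line
    intro t
    exact eval_plane (by omega) hF (hZ hΛ).2 (Λ.add_mem hxΛ (Λ.smul_mem t hz))
  obtain ⟨Λ, hΛ, hxΛ, -⟩ : ∃ Λ ∈ Z, x.rep ∈ Λ ∧ True := by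
    obtain ⟨y, hy⟩ := p.last.2.1.2.1
    obtain ⟨Λ, h1, h2, _⟩ := p.last.2.2 hy
    exact ⟨Λ, h1, h2, trivial⟩
  -- F is not divisible by the tangent form
  have hnd : elim c i₀ F ≠ 0 := by
    intro h0
    have hdv := elim_dvd c i₀ F
    rw [h0, sub_zero] at hdv
    obtain ⟨G, hG⟩ := hdv
    have hfr : Module.finrank KK Λ = m + 1 := (hZ hΛ).1
    obtain ⟨f, hf⟩ := exists_linearIndependent_of_le_finrank (R := KK) (M := Λ) (n := 2) (by omega)
    have hf' := hf.map' Λ.subtype Λ.ker_subtype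
    have hli : LinearIndependent KK ![(f 0 : Fin (n + 1) → KK), f 1] := by
      have he : ![(f 0 : Fin (n + 1) → KK), f 1] = Λ.subtype ∘ f := by
        funext i; fin_cases i <;> rfl
      rw [he]; exact hf'
    have hpd : (MvPolynomial.pderiv i₀ F).IsHomogeneous (d - 1) := hF.pderiv
    obtain ⟨s, t, hne, hz⟩ := exists_zero (by omega) hpd _ _ hli
    set z := s • (f 0 : Fin (n + 1) → KK) + t • (f 1 : Fin (n + 1) → KK) with hzdef
    have hzΛ : z ∈ Λ := Λ.add_mem (Λ.smul_mem _ (f 0).2) (Λ.smul_mem _ (f 1).2)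
    have hzT := hΛT Λ hΛ hxΛ z hzΛ
    have hgrad : ∀ i, MvPolynomial.eval z (MvPolynomial.pderiv i F) =
        c i * MvPolynomial.eval z G := by
      intro i
      rw [hG, Derivation.leibniz]
      have e1 : MvPolynomial.eval z (∑ i, MvPolynomial.C (c i) * MvPolynomial.X i) = 0 := by
        simpa using hzT
      have e2 : MvPolynomial.pderiv i (∑ i, MvPolynomial.C (c i) * MvPolynomial.X i) =
          MvPolynomial.C (c i) := by
        simp [MvPolynomial.pderiv_X, Pi.single_apply]
      rw [e2, map_add, smul_eq_mul, map_mul, e1, smul_eq_mul, map_mul, MvPolynomial.eval_C]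
      ring
    rw [hgrad] at hz
    have hG0 := (mul_eq_zero.mp hz).resolve_left hi₀
    exact hne (hns z fun i => by rw [hgrad, hG0, mul_zero])
  let R := MvPolynomial (Fin (n + 1)) KK
  let φ : {W : Set (Pn n) // ProjVariety W ∧
      W ⊆ {y : Pn n | ∃ Λ ∈ Z, x.rep ∈ Λ ∧ y.rep ∈ Λ}} → (PrimeSpectrum R)ᵒᵈ :=
    fun W => OrderDual.toDual ⟨vanI W.1, vanI_prime W.2.1⟩
  have hφ : StrictMono φ := by
    intro A B hAB
    exact vanI_lt A.2.1 hAB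
  let kT : PrimeSpectrum R := ⟨RingHom.ker (elim c i₀).toRingHom, RingHom.ker_isPrime _⟩
  have hor : (origI n).IsPrime := RingHom.ker_isPrime _
  let q1 := (p.map φ hφ).snoc (OrderDual.toDual kT) (by
    show RingHom.ker (elim c i₀).toRingHom < vanI (p.last).1
    refine lt_of_le_not_ge ?_ ?_
    · intro f hf y hy
      have hf : elim c i₀ f = 0 := hf
      obtain ⟨Λ', h1, h2, h3⟩ := p.last.2.2 hy
      rw [lineP_zero_iff]
      intro t
      rw [← elim_eval c i₀ _ (hΛT Λ' h1 h2 _ (Λ'.smul_mem t h3)), hf, map_zero]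
    · intro hle
      apply hnd
      have : F ∈ vanI (p.last).1 := by
        intro y hy
        obtain ⟨Λ', h1, h2, h3⟩ := p.last.2.2 hy
        rw [lineP_zero_iff]
        intro t
        exact eval_plane (by omega) hF (hZ h1).2 (Λ'.smul_mem t h3)
      exact hle this)
  let q2 := q1.snoc (OrderDual.toDual ⟨⊥, Ideal.isPrime_bot⟩) (by
    rw [RelSeries.last_snoc]
    show (⊥ : Ideal R) < RingHom.ker (elim c i₀).toRingHom
    rw [bot_lt_iff_ne_bot]
    intro h
    apply lin_ne c i₀ hi₀
    rw [← Ideal.mem_bot]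
    show _ ∈ (⊥ : Ideal R)
    rw [← h]
    exact elim_lin c i₀ hi₀)
  let q3 := q2.cons (OrderDual.toDual ⟨origI n, hor⟩) (by
    rw [RelSeries.head_snoc, RelSeries.head_snoc]
    show vanI (p.head).1 < origI n
    exact vanI_lt_orig p.head.2.1.2.1)
  have hl : q3.length = p.length + 3 := by
    simp [q3, q2, q1]
  have h1 := Order.LTSeries.length_le_krullDim q3
  rw [Order.krullDim_orderDual] at h1
  have h2 : ringKrullDim R = (n + 1 : ℕ) := by
    rw [MvPolynomial.ringKrullDim_of_isNoetherianRing, ringKrullDim_eq_zero_of_field]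
    simp
  have h3 : Order.krullDim (PrimeSpectrum R) = ((n + 1 : ℕ) : WithBot ℕ∞) := h2
  rw [h3, hl] at h1
  have : p.length + 3 ≤ n + 1 := by exact_mod_cast h1
  omega

/-- **Inequality (8) in §3.** Let X ⊂ Pⁿ be a non-singular hypersurface of degree
d ≥ 2.  Then for every m ≥ 1, every point x ∈ X and every subvariety Z ⊆ F_m(X),
the cone C_x(Z) of m-planes of Z through x satisfies dim C_x(Z) ≤ n - 2.  (A
hypersurface of degree at least 2 which is a cone is singular at its vertex.) -/
theorem statement12 (d n m : ℕ) (hd : 2 ≤ d) (hm : 1 ≤ m)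
    (F : MvPolynomial (Fin (n + 1)) KK) (hF : F.IsHomogeneous d)
    (hns : NonsingularK F)
    (x : Pn n) (hx : x ∈ hyp F)
    (Z : Set (Submodule KK (Fin (n + 1) → KK)))
    (hZc : GrClosed m n Z) (hZ : Z ⊆ Fano m n (hyp F)) :
    projDim {y : Pn n | ∃ Λ ∈ Z, x.rep ∈ Λ ∧ y.rep ∈ Λ} +
        ((2 : ENat) : WithBot ENat) ≤ ((n : ENat) : WithBot ENat) := by
  have key := chain_bound d n m hd hm F hF hns x Z hZ
  unfold projDim
  rcases isEmpty_or_nonempty {W : Set (Pn n) // ProjVariety W ∧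
      W ⊆ {y : Pn n | ∃ Λ ∈ Z, x.rep ∈ Λ ∧ y.rep ∈ Λ}} with h | h
  · rw [Order.krullDim_eq_bot, WithBot.bot_add]
    exact bot_le
  · obtain ⟨W⟩ := h
    have h2 := key (RelSeries.singleton _ W)
    obtain ⟨k, rfl⟩ : ∃ k, n = k + 2 := ⟨n - 2, by omega⟩
    have : Order.krullDim {W : Set (Pn (k + 2)) // ProjVariety W ∧
      W ⊆ {y : Pn (k + 2) | ∃ Λ ∈ Z, x.rep ∈ Λ ∧ y.rep ∈ Λ}} ≤ ((k : ENat) : WithBot ENat) := by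
      refine iSup_le fun p => ?_
      have := key p
      have : p.length ≤ k := by omega
      exact_mod_cast this
    refine (add_le_add_left this _).trans ?_
    norm_cast

end
end
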